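/- Let H be a complex Hilbert space with dim H ≥ 3, let B(H) be the algebra of bounded linear operators on H with the operator norm, and let Y be a real Banach space. Then every surjective isometry Δ : S(B(H)) → S(Y) between the unit spheres admits a unique extension to a surjective real-linear isometry from B(H) onto Y. (This is the von Neumann factor instance of the main theorem that every JBW*-triple of rank at least three satisfies the Mazur–Ulam property.) -/

import Mathlib

/-!
The points of the unit sphere joined to a rank-one partial isometry `e` by a segment in the sphere
form the convex face `e + ball (B₀ e)`, where `B₀ e` is the Peirce-zero space of `e`. Its image
under `Δ` is described by distances alone and turns out to be convex. As the unit ball of `B₀ e`, a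
copy of some `B(K)`, has extreme points (the unitaries) spanning `B₀ e`, `Δ` is affine on the face.

In rank at least three any two rank-one partial isometries are orthogonal to a common third one.
Because the operator norm is smooth at `e`, a norm-one functional on `Y` supporting the ball at
`Δ e` therefore pulls back under `Δ` to the matrix coefficient `x ↦ Re ⟪ξ, x η⟫` of `e = ξ ⊗ η` on
every face, and the faces are dense in the sphere. Matrix coefficients separate operators, so the
homogeneous extension of `Δ` is linear.
-/

open Metric Set Filter
open scoped Topology ComplexInnerProductSpace

section LocalSlope

variable {X Y : Type*} [NormedAddCommGroup X] [NormedSpace ℝ X]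
  [NormedAddCommGroup Y] [NormedSpace ℝ Y] {f : X → Y} {c v w : X} {d e : Y}

/-- Near `c` the map `f` is affine with slope `d` along every line parallel to `v`. -/
def HasLocalSlope (f : X → Y) (c v : X) (d : Y) : Prop :=
  ∀ᶠ p : ℝ × X in 𝓝 (0, c), f (p.2 + p.1 • v) = f p.2 + p.1 • d

namespace HasLocalSlope

theorem add (hv : HasLocalSlope f c v d) (hw : HasLocalSlope f c w e) :
    HasLocalSlope f c (v + w) (d + e) := by
  have hshift : Tendsto (fun p : ℝ × X ↦ (p.1, p.2 + p.1 • v)) (𝓝 (0, c)) (𝓝 (0, c)) :=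
    Continuous.tendsto' (by fun_prop) _ _ (by simp)
  filter_upwards [hv, hshift.eventually hw] with p hpv hpw
  rw [smul_add, ← add_assoc, hpw, hpv, add_assoc, smul_add]

theorem const_smul (hv : HasLocalSlope f c v d) (a : ℝ) : HasLocalSlope f c (a • v) (a • d) := by
  have hscale : Tendsto (fun p : ℝ × X ↦ (p.1 * a, p.2)) (𝓝 (0, c)) (𝓝 (0, c)) :=
    Continuous.tendsto' (by fun_prop) _ _ (by simp)
  filter_upwards [hscale.eventually hv] with p hp
  rw [smul_smul, smul_smul, hp]

theorem eventually_sub (hv : HasLocalSlope f c v d) :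
    ∀ᶠ s : ℝ in 𝓝 0, f (c + s • v) - f c = s • d := by
  have hline : Tendsto (fun s : ℝ ↦ (s, c)) (𝓝 0) (𝓝 (0, c)) :=
    Continuous.tendsto (by fun_prop) _
  filter_upwards [hline.eventually hv] with s hs
  rw [hs, add_sub_cancel_left]

theorem unique (hd : HasLocalSlope f c v d) (he : HasLocalSlope f c v e) : d = e := by
  obtain ⟨s, ⟨hsd, hse⟩, hs⟩ :=
    (((hd.eventually_sub.and he.eventually_sub).filter_mono nhdsWithin_le_nhds).and
      self_mem_nhdsWithin : ∀ᶠ s : ℝ in 𝓝[≠] 0, _).exists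
  exact smul_right_injective Y hs (hsd.symm.trans hse)

theorem eventually_nhds (hv : HasLocalSlope f c v d) : ∀ᶠ c' in 𝓝 c, HasLocalSlope f c' v d := by
  have hbase : Tendsto (fun c' : X ↦ ((0 : ℝ), c')) (𝓝 c) (𝓝 (0, c)) :=
    Continuous.tendsto (by fun_prop) _
  exact hbase.eventually (eventually_eventually_nhds.mpr hv)

theorem exists_of_mem_span {E : Set X} (hE : ∀ v ∈ E, ∃ d, HasLocalSlope f c v d)
    (hw : w ∈ Submodule.span ℝ E) : ∃ d, HasLocalSlope f c w d := by
  induction hw using Submodule.span_induction with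
  | mem v hv => exact hE v hv
  | zero => exact ⟨0, .of_forall fun p ↦ by simp⟩
  | add v w _ _ hv hw => exact ⟨_, hv.choose_spec.add hw.choose_spec⟩
  | smul a v _ hv => exact ⟨_, hv.choose_spec.const_smul a⟩

theorem eq_of_isPreconnected {U : Set X} (hU : IsPreconnected U) {d : X → Y}
    (hd : ∀ c ∈ U, HasLocalSlope f c v (d c)) {x y : X} (hx : x ∈ U) (hy : y ∈ U) : d x = d y :=
  hU.induction₂ (fun x y ↦ d x = d y)
    (fun c hc ↦ by
      filter_upwards [nhdsWithin_le_nhds (hd c hc).eventually_nhds, self_mem_nhdsWithin]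
        with c' hc' hc'U using hc'.unique (hd c' hc'U))
    (fun _ _ _ _ _ _ ↦ Eq.trans) (fun _ _ _ _ ↦ Eq.symm) hx hy

theorem sub_eq_of_segment (h : ∀ t ∈ Icc (0 : ℝ) 1, HasLocalSlope f (c + t • v) v d) :
    f (c + v) - f c = d := by
  have hsub := isPreconnected_Icc.induction₂
    (fun t t' : ℝ ↦ f (c + t' • v) - f (c + t • v) = (t' - t) • d)
    (fun t ht ↦ by
      have hshift : Tendsto (fun t' ↦ t' - t) (𝓝[Icc 0 1] t) (𝓝 0) :=
        (Continuous.tendsto' (by fun_prop) _ _ (by simp)).mono_left nhdsWithin_le_nhds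
      filter_upwards [hshift.eventually (h t ht).eventually_sub] with t' ht'
      rw [← ht', add_assoc, ← add_smul, add_sub_cancel])
    (fun t₁ t₂ t₃ _ _ _ h₁₂ h₂₃ ↦ by
      rw [← sub_add_sub_cancel, h₂₃, h₁₂, ← add_smul, sub_add_sub_cancel])
    (fun t t' _ _ htt' ↦ by rw [← neg_sub, htt', ← neg_smul, neg_sub])
    (left_mem_Icc.mpr zero_le_one) (right_mem_Icc.mpr zero_le_one)
  simpa using hsub

theorem exists_linearMap {U E : Set X} (hU : Convex ℝ U) (hE : Submodule.span ℝ E = ⊤)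
    (h : ∀ c ∈ U, ∀ v ∈ E, ∃ d, HasLocalSlope f c v d) :
    ∃ G : X →ₗ[ℝ] Y, (∀ x ∈ U, ∀ y ∈ U, f x - f y = G (x - y)) ∧
      ∀ c ∈ U, ∀ v, HasLocalSlope f c v (G v) := by
  rcases U.eq_empty_or_nonempty with rfl | ⟨c₀, hc₀⟩
  · exact ⟨0, by simp, by simp⟩
  have hslope : ∀ v, ∀ c ∈ U, ∃ d, HasLocalSlope f c v d := fun v c hc ↦
    exists_of_mem_span (h c hc) (hE ▸ Submodule.mem_top)
  choose! d hd using hslope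
  have hd₀ : ∀ v, ∀ c ∈ U, HasLocalSlope f c v (d v c₀) := fun v c hc ↦
    eq_of_isPreconnected hU.isPreconnected (hd v) hc hc₀ ▸ hd v c hc
  let G : X →ₗ[ℝ] Y :=
    { toFun := fun v ↦ d v c₀
      map_add' := fun v w ↦ (hd _ c₀ hc₀).unique ((hd v c₀ hc₀).add (hd w c₀ hc₀))
      map_smul' := fun a v ↦ (hd _ c₀ hc₀).unique ((hd v c₀ hc₀).const_smul a) }
  refine ⟨G, fun x hx y hy ↦ ?_, fun c hc v ↦ hd₀ v c hc⟩
  have hxy := sub_eq_of_segment fun t ht ↦ hd₀ (x - y) _ (hU.add_smul_sub_mem hy hx ht)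
  rwa [add_sub_cancel] at hxy

end HasLocalSlope

end LocalSlope

section Mankiewicz

variable {X Y : Type*} [NormedAddCommGroup X] [NormedSpace ℝ X]
  [NormedAddCommGroup Y] [NormedSpace ℝ Y]

theorem eq_add_smul_of_mem_extremePoints {v : X}
    (hv : v ∈ extremePoints ℝ (closedBall (0 : X) 1)) {x y : X} {s θ : ℝ}
    (hθ₀ : 0 < θ) (hθ₁ : θ < 1) (hyx : ‖y - x‖ ≤ θ * |s|)
    (hyxs : ‖y - (x + s • v)‖ ≤ (1 - θ) * |s|) : y = x + (θ * s) • v := by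
  rcases eq_or_ne s 0 with rfl | hs
  · simpa [sub_eq_zero] using hyx
  have hθ₁' : 0 < 1 - θ := sub_pos.mpr hθ₁
  have hmem : ∀ {a : ℝ} {z : X}, 0 < a → ‖z‖ ≤ a * |s| → (a * s)⁻¹ • z ∈ closedBall (0 : X) 1 := by
    intro a z ha hz
    rw [mem_closedBall_zero_iff, norm_smul, norm_inv, Real.norm_eq_abs, abs_mul, abs_of_pos ha]
    exact inv_mul_le_one_of_le₀ hz (by positivity)
  have hcomb : v ∈ openSegment ℝ ((θ * s)⁻¹ • (y - x)) (((1 - θ) * s)⁻¹ • (x + s • v - y)) := by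
    refine ⟨θ, 1 - θ, hθ₀, hθ₁', add_sub_cancel _ _, ?_⟩
    match_scalars <;> field_simp <;> ring
  have hleft := ((mem_extremePoints.mp hv).2 _ (hmem hθ₀ hyx) _
    (hmem hθ₁' (norm_sub_rev y _ ▸ hyxs)) hcomb).1
  rw [← hleft, smul_inv_smul₀ (by positivity), add_sub_cancel]

theorem norm_smul_le_abs {v : X} (hv : v ∈ closedBall (0 : X) 1) (s : ℝ) : ‖s • v‖ ≤ |s| := by
  rw [norm_smul, Real.norm_eq_abs]
  exact mul_le_of_le_one_right (abs_nonneg s) (mem_closedBall_zero_iff.mp hv)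

variable {f : X → Y} {S : Set X} {u v x : X} {s t θ : ℝ}

theorem map_add_smul_of_mem_extremePoints (hf : ∀ x ∈ S, ∀ y ∈ S, ‖f x - f y‖ = ‖x - y‖)
    (hc : Convex ℝ (f '' S)) (hv : v ∈ extremePoints ℝ (closedBall (0 : X) 1))
    (hx : x ∈ S) (hxs : x + s • v ∈ S) (hθ : θ ∈ Icc (0 : ℝ) 1) :
    f (x + (θ * s) • v) = (1 - θ) • f x + θ • f (x + s • v) := by
  rcases hθ.1.eq_or_lt with rfl | hθ₀
  · simp
  rcases hθ.2.eq_or_lt with rfl | hθ₁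
  · simp
  have hθ₁' : 0 < 1 - θ := sub_pos.mpr hθ₁
  obtain ⟨y, hy, hfy⟩ :=
    hc (mem_image_of_mem f hx) (mem_image_of_mem f hxs) hθ₁'.le hθ₀.le (sub_add_cancel _ _)
  have hlen : ‖f (x + s • v) - f x‖ ≤ |s| := by
    rw [hf _ hxs _ hx, add_sub_cancel_left]
    exact norm_smul_le_abs hv.1 s
  have hyx : ‖y - x‖ ≤ θ * |s| := by
    rw [← hf _ hy _ hx, hfy, show (1 - θ) • f x + θ • f (x + s • v) - f x
      = θ • (f (x + s • v) - f x) by module, norm_smul, Real.norm_eq_abs, abs_of_pos hθ₀]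
    gcongr
  have hyxs : ‖y - (x + s • v)‖ ≤ (1 - θ) * |s| := by
    rw [← hf _ hy _ hxs, hfy, show (1 - θ) • f x + θ • f (x + s • v) - f (x + s • v)
      = (1 - θ) • -(f (x + s • v) - f x) by module, norm_smul, norm_neg, Real.norm_eq_abs,
      abs_of_pos hθ₁']
    gcongr
  rw [← eq_add_smul_of_mem_extremePoints hv hθ₀ hθ₁ hyx hyxs, hfy]

theorem map_add_half_smul_of_mem_extremePoints (hf : ∀ x ∈ S, ∀ y ∈ S, ‖f x - f y‖ = ‖x - y‖)
    (hc : Convex ℝ (f '' S)) (hv : v ∈ extremePoints ℝ (closedBall (0 : X) 1))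
    (hx : x ∈ S) (hxs : x + s • v ∈ S) :
    f (x + (1 / 2 * s) • v) = (1 / 2 : ℝ) • (f x + f (x + s • v)) := by
  rw [map_add_smul_of_mem_extremePoints hf hc hv hx hxs ⟨by norm_num, by norm_num⟩]
  module

/- The preimage of the centre of the image parallelogram lies halfway between the midpoints of the
sides parallel to `v`, and these differ by a multiple of the extreme point `u`. -/
theorem map_parallelogram_of_mem_extremePoints (hf : ∀ x ∈ S, ∀ y ∈ S, ‖f x - f y‖ = ‖x - y‖)
    (hS : Convex ℝ S) (hc : Convex ℝ (f '' S))
    (hu : u ∈ extremePoints ℝ (closedBall (0 : X) 1))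
    (hv : v ∈ extremePoints ℝ (closedBall (0 : X) 1))
    (hx : x ∈ S) (hxs : x + s • u ∈ S) (hxt : x + t • v ∈ S) (hxst : x + s • u + t • v ∈ S) :
    f (x + s • u + t • v) - f (x + s • u) = f (x + t • v) - f x := by
  set m := x + (1 / 2 * t) • v with hm
  have hhalf : ∀ {a b : X}, a ∈ S → b ∈ S → (1 / 2 : ℝ) • a + (1 / 2 : ℝ) • b ∈ S := fun ha hb ↦
    hS ha hb (by norm_num) (by norm_num) (by norm_num)
  have hmS : m ∈ S := by convert hhalf hx hxt using 1; module
  have hmsS : m + s • u ∈ S := by convert hhalf hxs hxst using 1; module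
  have hfm : f m = (1 / 2 : ℝ) • (f x + f (x + t • v)) :=
    map_add_half_smul_of_mem_extremePoints hf hc hv hx hxt
  have hfms : f (m + s • u) = (1 / 2 : ℝ) • (f (x + s • u) + f (x + s • u + t • v)) := by
    rw [hm, add_right_comm]
    exact map_add_half_smul_of_mem_extremePoints hf hc hv hxs hxst
  obtain ⟨y, hy, hfy⟩ := hc (mem_image_of_mem f hx) (mem_image_of_mem f hxst)
    (by norm_num : (0 : ℝ) ≤ 1 / 2) (by norm_num : (0 : ℝ) ≤ 1 / 2) (by norm_num)
  have hlen : ∀ {z : Y}, ‖z‖ = ‖s • u‖ → ‖(1 / 2 : ℝ) • z‖ ≤ 1 / 2 * |s| := by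
    intro z hz
    rw [norm_smul, hz, Real.norm_of_nonneg (by norm_num)]
    gcongr
    exact norm_smul_le_abs hu.1 s
  have hym : ‖y - m‖ ≤ 1 / 2 * |s| := by
    rw [← hf _ hy _ hmS, hfy, hfm, show (1 / 2 : ℝ) • f x + (1 / 2 : ℝ) • f (x + s • u + t • v)
      - (1 / 2 : ℝ) • (f x + f (x + t • v))
      = (1 / 2 : ℝ) • (f (x + s • u + t • v) - f (x + t • v)) by module]
    exact hlen (by rw [hf _ hxst _ hxt]; congr 1; abel)
  have hyms : ‖y - (m + s • u)‖ ≤ (1 - 1 / 2) * |s| := by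
    rw [← hf _ hy _ hmsS, hfy, hfms, show (1 / 2 : ℝ) • f x + (1 / 2 : ℝ) • f (x + s • u + t • v)
      - (1 / 2 : ℝ) • (f (x + s • u) + f (x + s • u + t • v))
      = (1 / 2 : ℝ) • (f x - f (x + s • u)) by module, show (1 - 1 / 2 : ℝ) = 1 / 2 by norm_num]
    exact hlen (by rw [hf _ hx _ hxs, sub_add_cancel_left, norm_neg])
  rw [eq_add_smul_of_mem_extremePoints hu (by norm_num) (by norm_num) hym hyms,
    map_add_half_smul_of_mem_extremePoints hf hc hu hmS hmsS, hfm, hfms, ← sub_eq_zero] at hfy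
  rw [← sub_eq_zero, ← smul_right_injective Y (by norm_num : (-1 / 4 : ℝ) ≠ 0) |>.eq_iff, smul_zero,
    ← hfy]
  module

theorem eventually_mem_and_add_smul_mem {U : Set X} (hU : IsOpen U) {y : X} (hy : y ∈ U) (u : X) :
    ∀ᶠ p : ℝ × X in 𝓝 (0, y), p.2 ∈ U ∧ p.2 + p.1 • u ∈ U := by
  have hbase : Tendsto (fun p : ℝ × X ↦ p.2) (𝓝 (0, y)) (𝓝 y) := continuous_snd.tendsto _
  have hshift : Tendsto (fun p : ℝ × X ↦ p.2 + p.1 • u) (𝓝 (0, y)) (𝓝 y) :=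
    Continuous.tendsto' (by fun_prop) _ _ (by simp)
  exact (hbase.eventually (hU.mem_nhds hy)).and (hshift.eventually (hU.mem_nhds hy))

/- By the parallelogram law the increment has slope zero along every extreme direction. -/
theorem map_add_smul_sub_eq_of_mem_extremePoints {U : Set X} {y z : X}
    (hf : ∀ x ∈ S, ∀ y ∈ S, ‖f x - f y‖ = ‖x - y‖) (hS : Convex ℝ S) (hc : Convex ℝ (f '' S))
    (hX : Submodule.span ℝ (extremePoints ℝ (closedBall (0 : X) 1)) = ⊤)
    (hv : v ∈ extremePoints ℝ (closedBall (0 : X) 1)) (hUo : IsOpen U) (hU : Convex ℝ U)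
    (hUS : ∀ y ∈ U, y ∈ S ∧ y + t • v ∈ S) (hy : y ∈ U) (hz : z ∈ U) :
    f (y + t • v) - f y = f (z + t • v) - f z := by
  have hflat : ∀ y ∈ U, ∀ u ∈ extremePoints ℝ (closedBall (0 : X) 1),
      HasLocalSlope (fun y ↦ f (y + t • v) - f y) y u 0 := by
    intro y hy u hu
    filter_upwards [eventually_mem_and_add_smul_mem hUo hy u] with p hp
    rw [smul_zero, add_zero]
    exact map_parallelogram_of_mem_extremePoints hf hS hc hu hv (hUS _ hp.1).1
      (hUS _ hp.2).1 (hUS _ hp.1).2 (hUS _ hp.2).2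
  obtain ⟨G, hG, hslope⟩ := HasLocalSlope.exists_linearMap hU hX
    fun y hy u hu ↦ ⟨0, hflat y hy u hu⟩
  have hG₀ : G = 0 := LinearMap.ext_on hX fun u hu ↦ (hslope y hy u).unique (hflat y hy u hu)
  rw [← sub_eq_zero, hG y hy z hz, hG₀, LinearMap.zero_apply]

theorem exists_hasLocalSlope_of_mem_extremePoints {c : X}
    (hf : ∀ x ∈ S, ∀ y ∈ S, ‖f x - f y‖ = ‖x - y‖) (hS : Convex ℝ S) (hc : Convex ℝ (f '' S))
    (hX : Submodule.span ℝ (extremePoints ℝ (closedBall (0 : X) 1)) = ⊤)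
    (hv : v ∈ extremePoints ℝ (closedBall (0 : X) 1)) (hcS : c ∈ interior S) :
    ∃ d, HasLocalSlope f c v d := by
  obtain ⟨ε, hε, hεS⟩ := Metric.mem_nhds_iff.mp (mem_interior_iff_mem_nhds.mp hcS)
  obtain ⟨δ, hδ, rfl⟩ : ∃ δ > 0, ε = δ + δ := ⟨ε / 2, half_pos hε, (add_halves ε).symm⟩
  have hball : ∀ y ∈ ball c δ, y ∈ S ∧ y + δ • v ∈ S := by
    refine fun y hy ↦ ⟨hεS (ball_subset_ball (by linarith) hy), hεS ?_⟩
    rw [mem_ball_iff_norm, add_sub_right_comm]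
    exact (norm_add_le _ _).trans_lt (add_lt_add_of_lt_of_le (mem_ball_iff_norm.mp hy)
      ((norm_smul_le_abs hv.1 δ).trans_eq (abs_of_pos hδ)))
  set d := δ⁻¹ • (f (c + δ • v) - f c) with hd
  have hforward : ∀ y ∈ ball c δ, ∀ s ∈ Icc 0 δ, f (y + s • v) = f y + s • d := by
    intro y hy s hs
    have hseg := map_add_smul_of_mem_extremePoints (θ := s / δ) hf hc hv (hball y hy).1
      (hball y hy).2 ⟨div_nonneg hs.1 hδ.le, div_le_one_of_le₀ hs.2 hδ.le⟩
    rw [div_mul_cancel₀ s hδ.ne'] at hseg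
    rw [hseg, hd, ← map_add_smul_sub_eq_of_mem_extremePoints hf hS hc hX hv isOpen_ball
      (convex_ball c δ) hball hy (mem_ball_self hδ)]
    module
  refine ⟨d, ?_⟩
  have hsmall : ∀ᶠ p : ℝ × X in 𝓝 (0, c), p.1 ∈ Ioo (-δ) δ :=
    continuous_fst.tendsto _ (Ioo_mem_nhds (neg_lt_zero.mpr hδ) hδ)
  filter_upwards [hsmall,
    eventually_mem_and_add_smul_mem isOpen_ball (mem_ball_self hδ : c ∈ ball c δ) v]
    with ⟨s, y⟩ hs hys
  rcases le_total 0 s with h₀ | h₀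
  · exact hforward y hys.1 s ⟨h₀, hs.2.le⟩
  · have hback := hforward _ hys.2 (-s) ⟨neg_nonneg.mpr h₀, neg_le.mp hs.1.le⟩
    rw [neg_smul, neg_smul, add_neg_cancel_right] at hback
    exact eq_add_of_add_neg_eq hback.symm

theorem exists_linearIsometry_of_convex_image
    (hf : ∀ x ∈ S, ∀ y ∈ S, ‖f x - f y‖ = ‖x - y‖) (hS : Convex ℝ S) (hc : Convex ℝ (f '' S))
    (hX : Submodule.span ℝ (extremePoints ℝ (closedBall (0 : X) 1)) = ⊤)
    (hne : (interior S).Nonempty) :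
    ∃ G : X →ₗᵢ[ℝ] Y, ∀ x ∈ S, ∀ y ∈ S, f x - f y = G (x - y) := by
  obtain ⟨G, hG, hslope⟩ := HasLocalSlope.exists_linearMap hS.interior hX fun c hcS v hv ↦
    exists_hasLocalSlope_of_mem_extremePoints hf hS hc hX hv hcS
  obtain ⟨c, hcS⟩ := hne
  have hnorm : ∀ v, ‖G v‖ = ‖v‖ := by
    intro v
    have hline : Tendsto (fun s : ℝ ↦ c + s • v) (𝓝 0) (𝓝 c) :=
      Continuous.tendsto' (by fun_prop) _ _ (by simp)
    obtain ⟨s, ⟨hsv, hs⟩, hs₀⟩ := ((((hslope c hcS v).eventually_sub.and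
      (hline.eventually (mem_interior_iff_mem_nhds.mp hcS))).filter_mono nhdsWithin_le_nhds).and
      self_mem_nhdsWithin : ∀ᶠ s : ℝ in 𝓝[≠] 0, _).exists
    have hfs := hf _ hs c (interior_subset hcS)
    rw [hsv, add_sub_cancel_left, norm_smul, norm_smul] at hfs
    exact mul_left_cancel₀ (norm_ne_zero_iff.mpr hs₀) hfs
  let G' : X →ₗᵢ[ℝ] Y := ⟨G, hnorm⟩
  have hfS : ContinuousOn f S := (LipschitzOnWith.of_dist_le_mul (K := 1) fun x hx y hy ↦ by
    rw [dist_eq_norm, hf x hx y hy, dist_eq_norm, NNReal.coe_one, one_mul]).continuousOn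
  have hS_int : S ⊆ closure (interior S) := by
    rw [hS.closure_interior_eq_closure_of_nonempty_interior ⟨c, hcS⟩]
    exact subset_closure
  have hfc : EqOn f (fun x ↦ G' x + (f c - G' c)) S := by
    refine EqOn.of_subset_closure (fun x hx ↦ ?_) hfS (by fun_prop) interior_subset hS_int
    have hxc : f x - f c = G' x - G' c := (hG x hx c hcS).trans (map_sub G x c)
    rw [← sub_add_cancel (f x) (f c), hxc]
    abel
  refine ⟨G', fun x hx y hy ↦ ?_⟩
  rw [hfc hx, hfc hy, map_sub, add_sub_add_right_eq_sub]

end Mankiewicz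

section Sphere

variable {X Y : Type*} [NormedAddCommGroup X] [NormedAddCommGroup Y]

/-- `Δ` restricts to a surjective isometry between the unit spheres of `X` and `Y`. -/
structure IsSphereIsometry (Δ : X → Y) : Prop where
  norm_map : ∀ x, ‖x‖ = 1 → ‖Δ x‖ = 1
  surj : ∀ y : Y, ‖y‖ = 1 → ∃ x, ‖x‖ = 1 ∧ Δ x = y
  norm_sub : ∀ x y, ‖x‖ = 1 → ‖y‖ = 1 → ‖Δ x - Δ y‖ = ‖x - y‖

/-- The star of a point `e` of the unit sphere: the points of the sphere joined to `e` by a segment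
contained in the sphere. -/
def sphereStar (e : X) : Set X := {x | ‖x‖ = 1 ∧ ‖e + x‖ = 2}

theorem isClosed_sphereStar (e : X) : IsClosed (sphereStar e) :=
  (isClosed_eq continuous_norm continuous_const).inter (isClosed_eq (by fun_prop) continuous_const)

theorem neg_mem_sphereStar_iff {e x : X} (hx : ‖x‖ = 1) : -x ∈ sphereStar e ↔ ‖x - e‖ = 2 := by
  rw [sphereStar, Set.mem_ofPred_eq, norm_neg, ← sub_eq_add_neg, norm_sub_rev, and_iff_right hx]

namespace IsSphereIsometry

variable {Δ : X → Y} {e : X}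

theorem injOn (hΔ : IsSphereIsometry Δ) : InjOn Δ (sphere 0 1) := by
  intro x hx y hy hxy
  rw [mem_sphere_zero_iff_norm] at hx hy
  rwa [← sub_eq_zero, ← norm_eq_zero, ← hΔ.norm_sub x y hx hy, norm_eq_zero, sub_eq_zero]

theorem continuousOn (hΔ : IsSphereIsometry Δ) : ContinuousOn Δ (sphere 0 1) := by
  refine (LipschitzOnWith.of_dist_le_mul (K := 1) fun x hx y hy ↦ ?_).continuousOn
  rw [mem_sphere_zero_iff_norm] at hx hy
  rw [dist_eq_norm, hΔ.norm_sub x y hx hy, dist_eq_norm, NNReal.coe_one, one_mul]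

theorem neg_comp_neg (hΔ : IsSphereIsometry Δ) : IsSphereIsometry fun x ↦ -Δ (-x) where
  norm_map x hx := by rw [norm_neg, hΔ.norm_map _ (by rwa [norm_neg])]
  surj y hy := by
    obtain ⟨x, hx, hxy⟩ := hΔ.surj (-y) (by rwa [norm_neg])
    exact ⟨-x, by rwa [norm_neg], by rw [neg_neg, hxy, neg_neg]⟩
  norm_sub x y hx hy := by
    rw [neg_sub_neg, hΔ.norm_sub _ _ (by rwa [norm_neg]) (by rwa [norm_neg]), neg_sub_neg]

theorem image_sphereStar (hΔ : IsSphereIsometry Δ) (he : ‖e‖ = 1) :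
    Δ '' sphereStar e = sphereStar (-Δ (-e)) := by
  have hmem : ∀ x, ‖x‖ = 1 → (Δ x ∈ sphereStar (-Δ (-e)) ↔ x ∈ sphereStar e) := by
    intro x hx
    simp only [sphereStar, Set.mem_ofPred_eq]
    rw [hΔ.norm_map x hx, neg_add_eq_sub, hΔ.norm_sub x (-e) hx (by rwa [norm_neg]),
      sub_neg_eq_add, add_comm, and_iff_right rfl, and_iff_right hx]
  ext y
  constructor
  · rintro ⟨x, hx, rfl⟩
    exact (hmem x hx.1).mpr hx
  · intro hy
    obtain ⟨x, hx, rfl⟩ := hΔ.surj y hy.1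
    exact ⟨x, (hmem x hx).mp hy, rfl⟩

end IsSphereIsometry

variable [NormedSpace ℝ X] [NormedSpace ℝ Y]

theorem norm_self_add_self {e : X} (he : ‖e‖ = 1) : ‖e + e‖ = 2 := by
  rw [← two_smul ℝ e, norm_smul, he, Real.norm_ofNat, mul_one]

theorem self_mem_sphereStar {e : X} (he : ‖e‖ = 1) : e ∈ sphereStar e :=
  ⟨he, norm_self_add_self he⟩

theorem norm_smul_add_smul_le {x y : X} {a b r : ℝ} (hx : ‖x‖ ≤ r) (hy : ‖y‖ ≤ r)
    (ha : 0 ≤ a) (hb : 0 ≤ b) (hab : a + b = 1) : ‖a • x + b • y‖ ≤ r :=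
  mem_closedBall_zero_iff.mp (convex_closedBall 0 r (mem_closedBall_zero_iff.mpr hx)
    (mem_closedBall_zero_iff.mpr hy) ha hb hab)

theorem norm_smul_add_smul_eq_one {x y : X} (hx : ‖x‖ = 1) (hxy : y ∈ sphereStar x) {a b : ℝ}
    (ha : 0 ≤ a) (hb : 0 ≤ b) (hab : a + b = 1) : ‖a • x + b • y‖ = 1 := by
  refine (norm_smul_add_smul_le hx.le hxy.1.le ha hb hab).antisymm ?_
  have hswap : ‖b • x + a • y‖ ≤ 1 :=
    norm_smul_add_smul_le hx.le hxy.1.le hb ha (by rwa [add_comm])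
  have hsum : (a • x + b • y) + (b • x + a • y) = x + y := by
    rw [add_add_add_comm, ← add_smul, ← add_smul, add_comm b, hab, one_smul, one_smul]
  have htri := norm_add_le (a • x + b • y) (b • x + a • y)
  rw [hsum, hxy.2] at htri
  linarith

theorem starConvex_sphereStar {w : X} (hw : ‖w‖ = 1) : StarConvex ℝ w (sphereStar w) := by
  intro x hx a b ha hb hab
  refine ⟨norm_smul_add_smul_eq_one hw hx ha hb hab, ?_⟩
  have hmid := norm_smul_add_smul_eq_one hw hx (a := (1 + a) / 2) (b := b / 2) (by positivity)
    (by positivity) (by linarith)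
  rw [show w + (a • w + b • x) = (2 : ℝ) • (((1 + a) / 2) • w + (b / 2) • x) by module,
    norm_smul, hmid, Real.norm_ofNat, mul_one]

theorem sphereStar_subset_of_convex {e x : X} (hc : Convex ℝ (sphereStar e))
    (hx : x ∈ sphereStar e) : sphereStar e ⊆ sphereStar x := by
  intro y hy
  have hmid := (hc hx hy (by norm_num : (0 : ℝ) ≤ 1 / 2) (by norm_num : (0 : ℝ) ≤ 1 / 2)
    (by norm_num)).1
  rw [← smul_add, norm_smul, Real.norm_of_nonneg (by norm_num)] at hmid
  exact ⟨hy.1, by linarith⟩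

theorem sphereStar_smul_add_smul {e x : X} (he : ‖e‖ = 1) (hc : Convex ℝ (sphereStar e))
    (hx : x ∈ sphereStar e) {a b : ℝ} (ha : 0 < a) (hb : 0 ≤ b) (hab : a + b = 1) :
    sphereStar (a • e + b • x) = sphereStar e := by
  refine Subset.antisymm (fun y hy ↦ ⟨hy.1, ?_⟩)
    (sphereStar_subset_of_convex hc (hc (self_mem_sphereStar he) hx ha.le hb hab))
  have hey : ‖e + y‖ ≤ 2 := (norm_add_le _ _).trans (by rw [he, hy.1]; norm_num)
  have hxy : ‖x + y‖ ≤ 2 := (norm_add_le _ _).trans (by rw [hx.1, hy.1]; norm_num)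
  have htri := norm_add_le (a • (e + y)) (b • (x + y))
  rw [show a • (e + y) + b • (x + y) = a • e + b • x + (a + b) • y by module, hab, one_smul, hy.2,
    norm_smul, norm_smul, Real.norm_of_nonneg ha.le, Real.norm_of_nonneg hb] at htri
  nlinarith

namespace IsSphereIsometry

variable {Δ : X → Y} {e : X}

theorem image_sphereStar_subset_of_convex (hΔ : IsSphereIsometry Δ) (he : ‖e‖ = 1)
    (hc : Convex ℝ (sphereStar e)) : sphereStar (-Δ (-e)) ⊆ sphereStar (Δ e) := by
  rw [← hΔ.image_sphereStar he]
  rintro _ ⟨x, hx, rfl⟩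
  obtain ⟨y, hy, hye⟩ := hΔ.surj (-Δ e) (by rw [norm_neg, hΔ.norm_map e he])
  have hye' : -y ∈ sphereStar e := by
    rw [neg_mem_sphereStar_iff hy, norm_sub_rev, ← hΔ.norm_sub e y he hy, hye, sub_neg_eq_add,
      norm_self_add_self (hΔ.norm_map e he)]
  have hyx := (neg_mem_sphereStar_iff hy).mp (sphereStar_subset_of_convex hc hx hye')
  refine ⟨hΔ.norm_map x hx.1, ?_⟩
  rw [add_comm, ← sub_neg_eq_add, ← hye, hΔ.norm_sub x y hx.1 hy, norm_sub_rev, hyx]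

theorem image_sphereStar_of_convex (hΔ : IsSphereIsometry Δ) (he : ‖e‖ = 1)
    (hc : Convex ℝ (sphereStar e)) : Δ '' sphereStar e = sphereStar (Δ e) := by
  rw [hΔ.image_sphereStar he]
  refine (hΔ.image_sphereStar_subset_of_convex he hc).antisymm ?_
  simpa only [neg_neg] using hΔ.neg_comp_neg.image_sphereStar_subset_of_convex he hc

theorem image_neg_comp_neg_sphereStar (hΔ : IsSphereIsometry Δ) (he : ‖e‖ = 1)
    (hc : Convex ℝ (sphereStar e)) : (fun x ↦ -Δ (-x)) '' sphereStar e = Δ '' sphereStar e := by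
  rw [hΔ.neg_comp_neg.image_sphereStar_of_convex he hc, hΔ.image_sphereStar he]

/- Points `p` of the star interpolating between `e` and `x` have the same star as `e`, so the image
is star-shaped about `-Δ (-p)`; let `p` tend to `x`. -/
theorem starConvex_image_sphereStar (hΔ : IsSphereIsometry Δ) (he : ‖e‖ = 1)
    (hc : Convex ℝ (sphereStar e)) {x : X} (hx : x ∈ sphereStar e) :
    StarConvex ℝ (-Δ (-x)) (Δ '' sphereStar e) := by
  intro y hy a b ha hb hab
  set p : ℝ → X := fun t ↦ t • e + (1 - t) • x
  have hp : ∀ t ∈ Ioo (0 : ℝ) 1, p t ∈ sphereStar e := fun t ht ↦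
    hc (self_mem_sphereStar he) hx ht.1.le (sub_pos.mpr ht.2).le (add_sub_cancel _ _)
  have hstar : ∀ t ∈ Ioo (0 : ℝ) 1, a • -Δ (-p t) + b • y ∈ Δ '' sphereStar e := by
    intro t ht
    rw [← sphereStar_smul_add_smul he hc hx ht.1 (sub_pos.mpr ht.2).le (add_sub_cancel _ _),
      hΔ.image_sphereStar (hp t ht).1] at hy ⊢
    exact starConvex_sphereStar (by rw [norm_neg, hΔ.norm_map _ (by rw [norm_neg, (hp t ht).1])])
      hy ha hb hab
  have hIoo : ∀ᶠ t : ℝ in 𝓝[>] 0, t ∈ Ioo (0 : ℝ) 1 := Ioo_mem_nhdsGT zero_lt_one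
  have hpx : Tendsto p (𝓝[>] 0) (𝓝[sphere 0 1] x) :=
    tendsto_nhdsWithin_iff.mpr ⟨(Continuous.tendsto' (by fun_prop) _ _ (by simp [p])).mono_left
      nhdsWithin_le_nhds, hIoo.mono fun t ht ↦ mem_sphere_zero_iff_norm.mpr (hp t ht).1⟩
  have hlim : Tendsto (fun t ↦ -Δ (-p t)) (𝓝[>] 0) (𝓝 (-Δ (-x))) :=
    (hΔ.neg_comp_neg.continuousOn x (mem_sphere_zero_iff_norm.mpr hx.1)).tendsto.comp hpx
  have hclosed : IsClosed (Δ '' sphereStar e) := hΔ.image_sphereStar he ▸ isClosed_sphereStar _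
  exact hclosed.mem_of_tendsto ((hlim.const_smul a).add_const (b • y)) (hIoo.mono hstar)

theorem convex_image_sphereStar (hΔ : IsSphereIsometry Δ) (he : ‖e‖ = 1)
    (hc : Convex ℝ (sphereStar e)) : Convex ℝ (Δ '' sphereStar e) := by
  intro z hz
  rw [← hΔ.image_neg_comp_neg_sphereStar he hc] at hz
  obtain ⟨x, hx, rfl⟩ := hz
  exact hΔ.starConvex_image_sphereStar he hc hx

end IsSphereIsometry

theorem eq_of_image_eq_of_unique_center {X Y : Type*} [PseudoMetricSpace X] [PseudoMetricSpace Y]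
    {f g : X → Y} {A : Set X} (hf : ∀ x ∈ A, ∀ y ∈ A, dist (f x) (f y) = dist x y)
    (hg : ∀ x ∈ A, ∀ y ∈ A, dist (g x) (g y) = dist x y) (himg : f '' A = g '' A) {r : ℝ} {v : X}
    (hv : v ∈ A) (hvA : ∀ w ∈ A, dist w v ≤ r)
    (huniq : ∀ x ∈ A, (∀ w ∈ A, dist w x ≤ r) → x = v) : f v = g v := by
  obtain ⟨x, hx, hxv⟩ : f v ∈ g '' A := himg ▸ mem_image_of_mem f hv
  have hxA : ∀ w ∈ A, dist w x ≤ r := by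
    intro w hw
    obtain ⟨w', hw', hww'⟩ : g w ∈ f '' A := himg ▸ mem_image_of_mem g hw
    rw [← hg w hw x hx, hxv, ← hww', hf w' hw' v hv]
    exact hvA w' hw'
  rw [← hxv, huniq x hx hxA]

end Sphere

section RankOne

open InnerProductSpace

variable {H : Type*} [NormedAddCommGroup H] [InnerProductSpace ℂ H] {ξ η ξ' η' : H}

theorem norm_rankOne_of_unit (hξ : ‖ξ‖ = 1) (hη : ‖η‖ = 1) : ‖rankOne ℂ ξ η‖ = 1 := by
  rw [norm_rankOne, hξ, hη, one_mul]

theorem rankOne_apply_self (hη : ‖η‖ = 1) (ξ : H) : rankOne ℂ ξ η η = ξ := by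
  rw [rankOne_apply, inner_self_eq_one_of_norm_eq_one hη, one_smul]

theorem norm_sq_eq_norm_inner_sq_add (hη : ‖η‖ = 1) (h : H) :
    ‖h‖ ^ 2 = ‖⟪η, h⟫‖ ^ 2 + ‖h - ⟪η, h⟫ • η‖ ^ 2 := by
  have horth : ⟪⟪η, h⟫ • η, h - ⟪η, h⟫ • η⟫ = 0 := by
    rw [inner_smul_left, inner_sub_right, inner_smul_right,
      inner_self_eq_one_of_norm_eq_one hη, mul_one, sub_self, mul_zero]
  have hpyth := norm_add_sq_eq_norm_sq_add_norm_sq_of_inner_eq_zero _ _ horth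
  rwa [add_sub_cancel, norm_smul, hη, mul_one, ← sq, ← sq, ← sq] at hpyth

theorem norm_sub_inner_smul_le (hη : ‖η‖ = 1) (h : H) : ‖h - ⟪η, h⟫ • η‖ ≤ ‖h‖ := by
  rw [← sq_le_sq₀ (norm_nonneg _) (norm_nonneg _)]
  exact (norm_sq_eq_norm_inner_sq_add hη h).symm ▸ le_add_of_nonneg_left (sq_nonneg _)

/-- The real-linear functional `x ↦ Re ⟪ξ, x η⟫` on operators. -/
noncomputable def reCoeff (ξ η : H) : (H →L[ℂ] H) →ₗ[ℝ] ℝ where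
  toFun x := (⟪ξ, x η⟫).re
  map_add' x y := by simp
  map_smul' r x := by
    rw [_root_.smul_apply, ← Complex.coe_smul, inner_smul_right, Complex.re_ofReal_mul]
    rfl

theorem reCoeff_apply (ξ η : H) (x : H →L[ℂ] H) : reCoeff ξ η x = (⟪ξ, x η⟫).re := rfl

theorem reCoeff_rankOne_self (hξ : ‖ξ‖ = 1) (hη : ‖η‖ = 1) :
    reCoeff ξ η (rankOne ℂ ξ η) = 1 := by
  rw [reCoeff_apply, rankOne_apply_self hη, inner_self_eq_one_of_norm_eq_one hξ, Complex.one_re]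

theorem abs_reCoeff_le (hξ : ‖ξ‖ = 1) (hη : ‖η‖ = 1) (x : H →L[ℂ] H) :
    |reCoeff ξ η x| ≤ ‖x‖ := by
  calc |reCoeff ξ η x| ≤ ‖ξ‖ * ‖x η‖ :=
        (Complex.abs_re_le_norm _).trans (norm_inner_le_norm _ _)
    _ ≤ ‖x‖ := by rw [hξ, one_mul]; exact x.unit_le_opNorm η hη.le

theorem eq_zero_of_reCoeff_eq_zero {x : H →L[ℂ] H}
    (h : ∀ ξ η : H, ‖ξ‖ = 1 → ‖η‖ = 1 → reCoeff ξ η x = 0) : x = 0 := by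
  by_contra hx
  obtain ⟨η, hη, hxη⟩ := x.exists_nnnorm_eq_one_lt_apply_of_lt_opNNNorm (nnnorm_pos.mpr hx)
  have hη₁ : ‖η‖ = 1 := congrArg NNReal.toReal hη
  have hxη₀ : x η ≠ 0 := nnnorm_pos.mp hxη
  have hre := h (((‖x η‖ : ℂ)⁻¹) • x η) η (norm_smul_inv_norm (𝕜 := ℂ) hxη₀) hη₁
  simp [reCoeff_apply, inner_self_eq_norm_sq_to_K, ← Complex.ofReal_inv, ← Complex.ofReal_pow,
    hxη₀] at hre

/- Smoothness of the operator norm at `rankOne ℂ ξ η`: in the expansion of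
`‖(rankOne ℂ ξ η + y) h‖ ^ 2` the term linear in `y` only involves the component of `h` orthogonal
to `η`. -/
theorem norm_rankOne_add_sq_le (hξ : ‖ξ‖ = 1) (hη : ‖η‖ = 1) {y : H →L[ℂ] H}
    (hy : reCoeff ξ η y = 0) : ‖rankOne ℂ ξ η + y‖ ^ 2 ≤ 1 + 2 * ‖y‖ ^ 2 := by
  suffices hbound : ∀ h, ‖(rankOne ℂ ξ η + y) h‖ ≤ √(1 + 2 * ‖y‖ ^ 2) * ‖h‖ by
    rw [← Real.le_sqrt (norm_nonneg _) (by positivity)]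
    exact ContinuousLinearMap.opNorm_le_bound _ (Real.sqrt_nonneg _) hbound
  intro h
  have hpyth := norm_sq_eq_norm_inner_sq_add hη h
  set a := ⟪η, h⟫ with ha
  set h' := h - a • η with hh'
  have hcross : (⟪a • ξ, y h⟫).re ≤ ‖a‖ * (‖y‖ * ‖h'‖) := by
    have hsplit : (⟪a • ξ, y h⟫).re = (⟪a • ξ, y h'⟫).re := by
      rw [hh', map_sub, map_smul, inner_sub_right, inner_smul_left, inner_smul_left,
        inner_smul_right, ← mul_assoc, mul_comm _ a, Complex.mul_conj, Complex.sub_re,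
        Complex.re_ofReal_mul, ← reCoeff_apply, hy, mul_zero, sub_zero]
    rw [hsplit]
    calc (⟪a • ξ, y h'⟫).re ≤ ‖a • ξ‖ * ‖y h'‖ :=
          (Complex.re_le_norm _).trans (norm_inner_le_norm _ _)
      _ ≤ ‖a‖ * (‖y‖ * ‖h'‖) := by
          rw [norm_smul, hξ, mul_one]
          gcongr
          exact y.le_opNorm h'
  have hyh : ‖y h‖ ^ 2 ≤ ‖y‖ ^ 2 * ‖h‖ ^ 2 := by
    rw [← mul_pow]
    exact pow_le_pow_left₀ (norm_nonneg _) (y.le_opNorm h) 2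
  have ha_le : ‖y‖ ^ 2 * ‖a‖ ^ 2 ≤ ‖y‖ ^ 2 * ‖h‖ ^ 2 := by
    gcongr
    simpa [hη] using norm_inner_le_norm η h
  rw [← sq_le_sq₀ (norm_nonneg _) (by positivity)]
  calc ‖(rankOne ℂ ξ η + y) h‖ ^ 2 = ‖a‖ ^ 2 + 2 * (⟪a • ξ, y h⟫).re + ‖y h‖ ^ 2 := by
        rw [_root_.add_apply, rankOne_apply, ← ha, @norm_add_sq ℂ, norm_smul, hξ, mul_one]
        rfl
    _ ≤ (1 + 2 * ‖y‖ ^ 2) * ‖h‖ ^ 2 := by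
        linarith [two_mul_le_add_sq (‖a‖ * ‖y‖) ‖h'‖]
    _ = (√(1 + 2 * ‖y‖ ^ 2) * ‖h‖) ^ 2 := by rw [mul_pow, Real.sq_sqrt (by positivity)]

theorem eq_reCoeff_of_le_norm (hξ : ‖ξ‖ = 1) (hη : ‖η‖ = 1)
    {N : Submodule ℝ (H →L[ℂ] H)} (he : rankOne ℂ ξ η ∈ N) {L : (H →L[ℂ] H) →ₗ[ℝ] ℝ}
    (hL : ∀ z ∈ N, L z ≤ ‖z‖) (hLe : L (rankOne ℂ ξ η) = 1) :
    ∀ z ∈ N, L z = reCoeff ξ η z := by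
  have hnonpos : ∀ y ∈ N, reCoeff ξ η y = 0 → L y ≤ 0 := by
    intro y hyN hy
    by_contra! hLy
    set t := L y / (‖y‖ ^ 2 + 1)
    have ht₀ : 0 < t := by positivity
    have htL : t * (‖y‖ ^ 2 + 1) = L y := div_mul_cancel₀ _ (by positivity)
    have hle : 1 + t * L y ≤ ‖rankOne ℂ ξ η + t • y‖ := by
      simpa [hLe] using hL _ (N.add_mem he (N.smul_mem t hyN))
    have hsmooth := norm_rankOne_add_sq_le hξ hη (y := t • y) (by rw [map_smul, hy, smul_zero])
    rw [norm_smul, Real.norm_of_nonneg ht₀.le] at hsmooth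
    have hsq := pow_le_pow_left₀ (by positivity) hle 2
    rw [← htL] at hsq
    nlinarith [sq_nonneg (t * (t * (‖y‖ ^ 2 + 1)))]
  intro z hz
  set y := z - reCoeff ξ η z • rankOne ℂ ξ η with hy
  have hyN : y ∈ N := N.sub_mem hz (N.smul_mem _ he)
  have hy₀ : reCoeff ξ η y = 0 := by simp [hy, reCoeff_rankOne_self hξ hη]
  have hLy : L y = 0 := (hnonpos y hyN hy₀).antisymm (by
    simpa using hnonpos (-y) (N.neg_mem hyN) (by rw [map_neg, hy₀, neg_zero]))
  rwa [hy, map_sub, map_smul, hLe, smul_eq_mul, mul_one, sub_eq_zero] at hLy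

theorem mem_sphereStar_rankOne_iff_apply (hξ : ‖ξ‖ = 1) (hη : ‖η‖ = 1) {x : H →L[ℂ] H} :
    x ∈ sphereStar (rankOne ℂ ξ η) ↔ ‖x‖ ≤ 1 ∧ x η = ξ := by
  have hnorm_le : ‖x‖ ≤ 1 → ‖rankOne ℂ ξ η + x‖ ≤ 2 := fun hx ↦
    (norm_add_le _ _).trans (by rw [norm_rankOne_of_unit hξ hη]; linarith)
  constructor
  · rintro ⟨hx, hex⟩
    obtain ⟨ψ, hψ, hψex⟩ := exists_dual_vector'' ℝ (rankOne ℂ ξ η + x)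
    have hψ_le : ∀ z, ψ z ≤ ‖z‖ := fun z ↦ (le_abs_self _).trans
      ((ψ.le_opNorm z).trans (mul_le_of_le_one_left (norm_nonneg z) hψ))
    have hψe := hψ_le (rankOne ℂ ξ η)
    have hψx := hψ_le x
    rw [norm_rankOne_of_unit hξ hη] at hψe
    rw [hx] at hψx
    rw [map_add, hex] at hψex
    have hsum : ψ (rankOne ℂ ξ η) + ψ x = 2 := by simpa using hψex
    have hcoeff := eq_reCoeff_of_le_norm hξ hη (N := ⊤) (L := ψ.toLinearMap) trivial
      (fun z _ ↦ hψ_le z) (show ψ (rankOne ℂ ξ η) = 1 by linarith) x trivial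
    have hre : (⟪ξ, x η⟫).re = 1 := hcoeff.symm.trans (show ψ x = 1 by linarith)
    refine ⟨hx.le, eq_of_norm_le_re_inner_eq_norm_sq (𝕜 := ℂ) ?_ ?_⟩
    · rw [hξ, ← hx]
      exact x.unit_le_opNorm η hη.le
    · rw [inner_re_symm, hξ, one_pow]
      exact hre
  · rintro ⟨hx, hxη⟩
    have happly := (rankOne ℂ ξ η + x).unit_le_opNorm η hη.le
    rw [_root_.add_apply, rankOne_apply_self hη, hxη, norm_self_add_self hξ] at happly
    refine ⟨hx.antisymm ?_, (hnorm_le hx).antisymm happly⟩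
    rw [← hξ, ← hxη]
    exact x.unit_le_opNorm η hη.le

theorem convex_sphereStar_rankOne (hξ : ‖ξ‖ = 1) (hη : ‖η‖ = 1) :
    Convex ℝ (sphereStar (rankOne ℂ ξ η)) := by
  intro x hx y hy a b ha hb hab
  rw [mem_sphereStar_rankOne_iff_apply hξ hη] at hx hy ⊢
  refine ⟨norm_smul_add_smul_le hx.1 hy.1 ha hb hab, ?_⟩
  rw [_root_.add_apply, _root_.smul_apply, _root_.smul_apply, hx.2, hy.2, ← add_smul, hab, one_smul]

/-- The Peirce-zero subspace of the partial isometry `rankOne ℂ ξ η`, for unit vectors `ξ` and `η`,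
as a real subspace. -/
def peirceZero (ξ η : H) : Submodule ℝ (H →L[ℂ] H) where
  carrier := {z | z η = 0 ∧ ∀ h, ⟪ξ, z h⟫ = 0}
  add_mem' hz hw := ⟨by simp [hz.1, hw.1], fun h ↦ by simp [hz.2, hw.2]⟩
  zero_mem' := by simp
  smul_mem' r z hz := ⟨by simp [hz.1], fun h ↦ by
    rw [_root_.smul_apply, ← Complex.coe_smul, inner_smul_right, hz.2, mul_zero]⟩

theorem rankOne_mem_peirceZero (hξ : ⟪ξ, ξ'⟫ = 0) (hη : ⟪η, η'⟫ = 0) :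
    rankOne ℂ ξ' η' ∈ peirceZero ξ η :=
  ⟨by rw [rankOne_apply, inner_eq_zero_symm.mp hη, zero_smul],
    fun h ↦ by rw [rankOne_apply, inner_smul_right, hξ, mul_zero]⟩

theorem norm_rankOne_add_le (hξ : ‖ξ‖ = 1) (hη : ‖η‖ = 1) {z : H →L[ℂ] H}
    (hz : z ∈ peirceZero ξ η) (hz₁ : ‖z‖ ≤ 1) : ‖rankOne ℂ ξ η + z‖ ≤ 1 := by
  refine ContinuousLinearMap.opNorm_le_bound _ zero_le_one fun h ↦ ?_
  have hzh : ‖z h‖ ≤ ‖h - ⟪η, h⟫ • η‖ := by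
    rw [← sub_zero (z h), ← smul_zero ⟪η, h⟫, ← hz.1, ← map_smul, ← map_sub]
    exact (z.le_opNorm _).trans (mul_le_of_le_one_left (norm_nonneg _) hz₁)
  have horth : ⟪⟪η, h⟫ • ξ, z h⟫ = 0 := by rw [inner_smul_left, hz.2, mul_zero]
  have hpyth := norm_add_sq_eq_norm_sq_add_norm_sq_of_inner_eq_zero _ _ horth
  rw [norm_smul, hξ, mul_one] at hpyth
  rw [one_mul, _root_.add_apply, rankOne_apply]
  rw [← sq_le_sq₀ (norm_nonneg _) (norm_nonneg _), sq, hpyth, ← sq, ← sq,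
    norm_sq_eq_norm_inner_sq_add hη h]
  gcongr

theorem rankOne_add_mem_sphereStar (hξ : ‖ξ‖ = 1) (hη : ‖η‖ = 1) {z : H →L[ℂ] H}
    (hz : z ∈ peirceZero ξ η) (hz₁ : ‖z‖ ≤ 1) :
    rankOne ℂ ξ η + z ∈ sphereStar (rankOne ℂ ξ η) := by
  rw [mem_sphereStar_rankOne_iff_apply hξ hη, _root_.add_apply, rankOne_apply_self hη, hz.1,
    add_zero]
  exact ⟨norm_rankOne_add_le hξ hη hz hz₁, rfl⟩

theorem norm_rankOne_add (hξ : ‖ξ‖ = 1) (hη : ‖η‖ = 1) {z : H →L[ℂ] H}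
    (hz : z ∈ peirceZero ξ η) (hz₁ : ‖z‖ ≤ 1) : ‖rankOne ℂ ξ η + z‖ = 1 :=
  (rankOne_add_mem_sphereStar hξ hη hz hz₁).1

theorem norm_sub_rankOne_le (hη : ‖η‖ = 1) {x : H →L[ℂ] H} (hxη : x η = ξ) :
    ‖x - rankOne ℂ ξ η‖ ≤ ‖x‖ := by
  refine ContinuousLinearMap.opNorm_le_bound _ (norm_nonneg x) fun h ↦ ?_
  rw [_root_.sub_apply, rankOne_apply, ← hxη, ← map_smul, ← map_sub]
  exact (x.le_opNorm _).trans (by gcongr; exact norm_sub_inner_smul_le hη h)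

variable [CompleteSpace H]

theorem adjoint_apply_eq_of_apply_eq (hξ : ‖ξ‖ = 1) (hη : ‖η‖ = 1) {x : H →L[ℂ] H}
    (hx : ‖x‖ ≤ 1) (hxη : x η = ξ) : ContinuousLinearMap.adjoint x ξ = η := by
  refine eq_of_norm_le_re_inner_eq_norm_sq (𝕜 := ℂ) ?_ ?_
  · rw [hη]
    refine ((ContinuousLinearMap.adjoint x).unit_le_opNorm ξ hξ.le).trans ?_
    rwa [LinearIsometryEquiv.norm_map]
  · rw [ContinuousLinearMap.adjoint_inner_left, hxη, inner_self_eq_one_of_norm_eq_one hξ, hη,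
      one_pow, RCLike.one_re]

theorem sub_rankOne_mem_peirceZero (hξ : ‖ξ‖ = 1) (hη : ‖η‖ = 1) {x : H →L[ℂ] H}
    (hx : ‖x‖ ≤ 1) (hxη : x η = ξ) : x - rankOne ℂ ξ η ∈ peirceZero ξ η := by
  refine ⟨by rw [_root_.sub_apply, rankOne_apply_self hη, hxη, sub_self], fun h ↦ ?_⟩
  rw [_root_.sub_apply, inner_sub_right, ← ContinuousLinearMap.adjoint_inner_left,
    adjoint_apply_eq_of_apply_eq hξ hη hx hxη, rankOne_apply, inner_smul_right,
    inner_self_eq_one_of_norm_eq_one hξ, mul_one, sub_self]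

theorem mem_sphereStar_rankOne_iff (hξ : ‖ξ‖ = 1) (hη : ‖η‖ = 1) {x : H →L[ℂ] H} :
    x ∈ sphereStar (rankOne ℂ ξ η) ↔
      x - rankOne ℂ ξ η ∈ peirceZero ξ η ∧ ‖x - rankOne ℂ ξ η‖ ≤ 1 := by
  constructor
  · intro hx
    obtain ⟨hx₁, hxη⟩ := (mem_sphereStar_rankOne_iff_apply hξ hη).mp hx
    exact ⟨sub_rankOne_mem_peirceZero hξ hη hx₁ hxη, (norm_sub_rankOne_le hη hxη).trans hx₁⟩
  · rintro ⟨hx, hx₁⟩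
    simpa using rankOne_add_mem_sphereStar hξ hη hx hx₁

theorem mem_sphereStar_rankOne_inter_iff (hξ : ‖ξ‖ = 1) (hη : ‖η‖ = 1) (hξ' : ‖ξ'‖ = 1)
    (hη' : ‖η'‖ = 1) (hξξ' : ⟪ξ, ξ'⟫ = 0) (hηη' : ⟪η, η'⟫ = 0) {x : H →L[ℂ] H} :
    x ∈ sphereStar (rankOne ℂ ξ η) ∩ sphereStar (rankOne ℂ ξ' η') ↔
      x - (rankOne ℂ ξ η + rankOne ℂ ξ' η') ∈ peirceZero ξ η ⊓ peirceZero ξ' η' ∧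
        ‖x - (rankOne ℂ ξ η + rankOne ℂ ξ' η')‖ ≤ 1 := by
  have hmem' : rankOne ℂ ξ' η' ∈ peirceZero ξ η := rankOne_mem_peirceZero hξξ' hηη'
  have hmem : rankOne ℂ ξ η ∈ peirceZero ξ' η' :=
    rankOne_mem_peirceZero (inner_eq_zero_symm.mp hξξ') (inner_eq_zero_symm.mp hηη')
  rw [mem_inter_iff, mem_sphereStar_rankOne_iff hξ hη]
  constructor
  · rintro ⟨⟨hx, hx₁⟩, hx'⟩
    have hxη' : (x - rankOne ℂ ξ η) η' = ξ' := by
      rw [_root_.sub_apply, ((mem_sphereStar_rankOne_iff_apply hξ' hη').mp hx').2, hmem.1, sub_zero]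
    have hxp : x - rankOne ℂ ξ η - rankOne ℂ ξ' η' ∈ peirceZero ξ η := sub_mem hx hmem'
    have hxp' := sub_rankOne_mem_peirceZero hξ' hη' hx₁ hxη'
    have hle := (norm_sub_rankOne_le hη' hxη').trans hx₁
    rw [sub_sub] at hxp hxp' hle
    exact ⟨⟨hxp, hxp'⟩, hle⟩
  · rintro ⟨⟨hx, hx'⟩, hx₁⟩
    set z := x - (rankOne ℂ ξ η + rankOne ℂ ξ' η') with hz
    have hxz : x - rankOne ℂ ξ η = rankOne ℂ ξ' η' + z := by rw [hz]; abel
    have hxz' : x = rankOne ℂ ξ' η' + (rankOne ℂ ξ η + z) := by rw [hz]; abel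
    rw [hxz]
    refine ⟨⟨add_mem hmem' hx, norm_rankOne_add_le hξ' hη' hx' hx₁⟩, ?_⟩
    rw [hxz']
    exact rankOne_add_mem_sphereStar hξ' hη' (add_mem hmem hx')
      (norm_rankOne_add_le hξ hη hx hx₁)

end RankOne

section Faces

open InnerProductSpace

theorem eq_zero_of_forall_norm_sub_le_one {X : Type*} [NormedAddCommGroup X] [NormedSpace ℝ X]
    {N : Submodule ℝ X} {x : X} (hx : x ∈ N) (h : ∀ z ∈ N, ‖z‖ ≤ 1 → ‖x - z‖ ≤ 1) : x = 0 := by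
  by_contra hx₀
  have hle := h (-(‖x‖⁻¹ • x)) (N.neg_mem (N.smul_mem _ hx))
    ((norm_neg _).trans (norm_smul_inv_norm (𝕜 := ℝ) hx₀)).le
  have hpos : 0 < ‖x‖ := norm_pos_iff.mpr hx₀
  have hsub : x - -(‖x‖⁻¹ • x) = (1 + ‖x‖⁻¹) • x := by module
  rw [hsub, norm_smul, Real.norm_of_nonneg (by positivity), add_mul,
    inv_mul_cancel₀ hpos.ne'] at hle
  linarith

/- The midpoint `v` of the ball `A` is its only Chebyshev centre of radius one, a metric notion. -/
theorem IsSphereIsometry.map_neg_of_image_eq {X Y : Type*} [NormedAddCommGroup X]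
    [NormedSpace ℝ X] [NormedAddCommGroup Y] {Δ : X → Y} (hΔ : IsSphereIsometry Δ) {A : Set X}
    {N : Submodule ℝ X} {v : X} (hA₁ : A ⊆ sphere 0 1)
    (hA : ∀ x, x ∈ A ↔ x - v ∈ N ∧ ‖x - v‖ ≤ 1) (himg : (fun x ↦ -Δ (-x)) '' A = Δ '' A) :
    Δ (-v) = -Δ v := by
  have hdist : ∀ {Γ : X → Y}, IsSphereIsometry Γ → ∀ x ∈ A, ∀ y ∈ A,
      dist (Γ x) (Γ y) = dist x y := by
    intro Γ hΓ x hx y hy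
    rw [dist_eq_norm, dist_eq_norm]
    exact hΓ.norm_sub x y (mem_sphere_zero_iff_norm.mp (hA₁ hx))
      (mem_sphere_zero_iff_norm.mp (hA₁ hy))
  refine neg_eq_iff_eq_neg.mp (eq_of_image_eq_of_unique_center (hdist hΔ.neg_comp_neg) (hdist hΔ)
    himg (r := 1) ((hA v).mpr (by simp)) (fun w hw ↦ ?_) fun x hx hxA ↦ ?_)
  · exact (dist_eq_norm w v).trans_le ((hA w).mp hw).2
  · refine sub_eq_zero.mp (eq_zero_of_forall_norm_sub_le_one ((hA x).mp hx).1 fun z hz hz₁ ↦ ?_)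
    rw [sub_sub, ← dist_eq_norm, dist_comm]
    exact hxA _ ((hA _).mpr (by simpa using ⟨hz, hz₁⟩))

theorem eq_on_submodule_of_norm_le_one {X Y : Type*} [NormedAddCommGroup X] [NormedSpace ℝ X]
    [AddCommGroup Y] [Module ℝ Y] {L M : X →ₗ[ℝ] Y} {N : Submodule ℝ X}
    (h : ∀ z ∈ N, ‖z‖ ≤ 1 → L z = M z) : ∀ z ∈ N, L z = M z := by
  intro z hz
  rcases eq_or_ne z 0 with rfl | hz₀
  · rw [map_zero, map_zero]
  have hunit := h (‖z‖⁻¹ • z) (N.smul_mem _ hz) (norm_smul_inv_norm (𝕜 := ℝ) hz₀).le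
  rw [map_smul, map_smul] at hunit
  exact smul_right_injective Y (inv_ne_zero (norm_ne_zero_iff.mpr hz₀)) hunit

variable {H : Type*} [NormedAddCommGroup H] [InnerProductSpace ℂ H] {ξ η ξ' η' : H}

theorem exists_linearIsometryEquiv_apply_eq_smul (hξ : ‖ξ‖ = 1) (hη : ‖η‖ = 1) :
    ∃ (V : H ≃ₗᵢ[ℂ] H) (c : ℂ), ‖c‖ = 1 ∧ V η = c • ξ := by
  obtain ⟨c, hc, hreal⟩ := Complex.exists_norm_eq_mul_self ⟪η, ξ⟫
  have hcξ : ‖c • ξ‖ = 1 := by rw [norm_smul, hc, hξ, one_mul]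
  have hsymm : ⟪c • ξ, η⟫ = ⟪η, c • ξ⟫ := by
    rw [← inner_conj_symm, inner_smul_right, ← hreal, Complex.conj_ofReal]
  refine ⟨(ℂ ∙ (η - c • ξ))ᗮ.reflection, c, hc, ?_⟩
  have hmem : η + c • ξ ∈ (ℂ ∙ (η - c • ξ))ᗮ := by
    rw [Submodule.mem_orthogonal_singleton_iff_inner_right, inner_sub_left, inner_add_right,
      inner_add_right, hsymm, inner_self_eq_one_of_norm_eq_one hη,
      inner_self_eq_one_of_norm_eq_one hcξ]
    ring
  have hη_eq : η = (1 / 2 : ℂ) • ((η + c • ξ) + (η - c • ξ)) := by module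
  calc (ℂ ∙ (η - c • ξ))ᗮ.reflection η
      = (1 / 2 : ℂ) • ((η + c • ξ) + -(η - c • ξ)) := by
        conv_lhs => enter [2]; rw [hη_eq]
        rw [map_smul, map_add, Submodule.reflection_mem_subspace_eq_self hmem,
          Submodule.reflection_orthogonalComplement_singleton_eq_neg]
    _ = c • ξ := by module

theorem exists_linearIsometry_range_eq_peirceZero (hξ : ‖ξ‖ = 1) (hη : ‖η‖ = 1) :
    ∃ j : ((ℂ ∙ η)ᗮ →L[ℂ] (ℂ ∙ η)ᗮ) →ₗᵢ[ℝ] (H →L[ℂ] H), range j = peirceZero ξ η := by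
  obtain ⟨V, c, hc, hV⟩ := exists_linearIsometryEquiv_apply_eq_smul hξ hη
  have hc₀ : c ≠ 0 := norm_ne_zero_iff.mp (hc ▸ one_ne_zero)
  have horth : ∀ x, ⟪ξ, V x⟫ = 0 ↔ x ∈ (ℂ ∙ η)ᗮ := by
    intro x
    rw [Submodule.mem_orthogonal_singleton_iff_inner_right, ← V.inner_map_map η, hV,
      inner_smul_left, mul_eq_zero, or_iff_right (by simpa using hc₀)]
  set P : H →L[ℂ] (ℂ ∙ η)ᗮ := (ℂ ∙ η)ᗮ.orthogonalProjectionOnto with hP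
  set W : (ℂ ∙ η)ᗮ →ₗᵢ[ℂ] H := V.toLinearIsometry.comp (ℂ ∙ η)ᗮ.subtypeₗᵢ
  have hPη : P η = 0 := Submodule.orthogonalProjectionOnto_orthogonalComplement_singleton_eq_zero η
  have hnorm : ∀ z : (ℂ ∙ η)ᗮ →L[ℂ] (ℂ ∙ η)ᗮ, ‖W.toContinuousLinearMap ∘L z ∘L P‖ = ‖z‖ := by
    intro z
    rw [LinearIsometry.norm_toContinuousLinearMap_comp]
    refine le_antisymm ((z.opNorm_comp_le P).trans (mul_le_of_le_one_right (norm_nonneg z)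
      (Submodule.orthogonalProjectionOnto_norm_le _))) ?_
    refine ContinuousLinearMap.opNorm_le_bound _ (norm_nonneg _) fun h ↦ ?_
    simpa [hP] using (z ∘L P).le_opNorm (h : H)
  let j : ((ℂ ∙ η)ᗮ →L[ℂ] (ℂ ∙ η)ᗮ) →ₗᵢ[ℝ] (H →L[ℂ] H) :=
    { toFun z := W.toContinuousLinearMap ∘L z ∘L P
      map_add' z w := by ext h; simp
      map_smul' r z := by ext h; simp
      norm_map' := hnorm }
  have hj : ∀ z h, j z h = V (z (P h)) := fun z h ↦ rfl
  refine ⟨j, Subset.antisymm ?_ fun y hy ↦ ?_⟩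
  · rintro _ ⟨z, rfl⟩
    exact ⟨by simp [hj, hPη], fun h ↦ by rw [hj, horth]; exact (z (P h)).2⟩
  · refine ⟨P ∘L (V.symm : H →L[ℂ] H) ∘L y ∘L (ℂ ∙ η)ᗮ.subtypeL, ContinuousLinearMap.ext fun h ↦ ?_⟩
    have hyP : y (P h) = y h := by
      change y ((ℂ ∙ η)ᗮ.starProjection h) = y h
      rw [Submodule.starProjection_orthogonal_val, Submodule.starProjection_unit_singleton ℂ hη,
        map_sub, map_smul, hy.1, smul_zero, sub_zero]
    have hyh : V.symm (y h) ∈ (ℂ ∙ η)ᗮ := by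
      rw [← horth, V.apply_symm_apply]
      exact hy.2 h
    calc V (P (V.symm (y (P h)))) = V (V.symm (y h)) := by
          rw [hyP]
          exact congrArg V ((ℂ ∙ η)ᗮ.starProjection_eq_self_iff.mpr hyh)
      _ = y h := V.apply_symm_apply _

variable [CompleteSpace H]

theorem mem_extremePoints_of_mem_unitary {u : H →L[ℂ] H} (hu : u ∈ unitary (H →L[ℂ] H)) :
    u ∈ extremePoints ℝ (closedBall (0 : H →L[ℂ] H) 1) := by
  let _ : InnerProductSpace ℝ H := InnerProductSpace.rclikeToReal ℂ H
  have hnorm : ∀ h, ‖u h‖ = ‖h‖ := ContinuousLinearMap.norm_map_of_mem_unitary hu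
  have hball : ∀ {x : H →L[ℂ] H}, x ∈ closedBall (0 : H →L[ℂ] H) 1 → ∀ h,
      x h ∈ closedBall (0 : H) ‖h‖ := by
    intro x hx h
    rw [mem_closedBall_zero_iff] at hx ⊢
    exact (x.le_opNorm h).trans (mul_le_of_le_one_left (norm_nonneg _) hx)
  refine ⟨mem_closedBall_zero_iff.mpr (ContinuousLinearMap.opNorm_le_bound _ zero_le_one fun h ↦
    by rw [hnorm, one_mul]), ?_⟩
  rintro a ha b hb ⟨s, t, hs, ht, hst, rfl⟩
  ext h
  rcases eq_or_ne h 0 with rfl | hh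
  · simp
  have hext := StrictConvexSpace.sphere_subset_extremePoints_closedBall (0 : H)
    (norm_ne_zero_iff.mpr hh) (mem_sphere_zero_iff_norm.mpr (hnorm h))
  exact hext.2 (hball ha h) (hball hb h) ⟨s, t, hs, ht, hst, by simp⟩

theorem span_extremePoints_closedBall_eq_top :
    Submodule.span ℝ (extremePoints ℝ (closedBall (0 : H →L[ℂ] H) 1)) = ⊤ := by
  rw [eq_top_iff]
  rintro x -
  obtain ⟨u, c, rfl, -⟩ := CStarAlgebra.exists_sum_four_unitary x
  refine sum_mem fun i _ ↦ ?_
  obtain ⟨w, hw, hwc⟩ := Complex.exists_norm_mul_eq_self (c i)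
  have hw_mem : w ∈ unitary ℂ := by
    rw [Unitary.mem_iff_star_mul_self, Complex.star_def, Complex.conj_mul', hw]
    simp
  rw [← hwc, mul_comm, mul_smul, Complex.coe_smul]
  exact Submodule.smul_mem _ _ (Submodule.subset_span
    (mem_extremePoints_of_mem_unitary (Unitary.smul_mem_of_mem hw_mem (u i).2)))

variable {Y : Type*} [NormedAddCommGroup Y] [NormedSpace ℝ Y] {Δ : (H →L[ℂ] H) → Y}
  {G G' : (H →L[ℂ] H) →ₗ[ℝ] Y}

theorem IsSphereIsometry.map_neg_rankOne_add_rankOne (hΔ : IsSphereIsometry Δ) (hξ : ‖ξ‖ = 1)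
    (hη : ‖η‖ = 1) (hξ' : ‖ξ'‖ = 1) (hη' : ‖η'‖ = 1) (hξξ' : ⟪ξ, ξ'⟫ = 0) (hηη' : ⟪η, η'⟫ = 0) :
    Δ (-(rankOne ℂ ξ η + rankOne ℂ ξ' η')) = -Δ (rankOne ℂ ξ η + rankOne ℂ ξ' η') := by
  have hsphere : ∀ e : H →L[ℂ] H, sphereStar e ⊆ sphere 0 1 := fun e x hx ↦
    mem_sphere_zero_iff_norm.mpr hx.1
  refine hΔ.map_neg_of_image_eq (inter_subset_left.trans (hsphere _))
    (fun x ↦ mem_sphereStar_rankOne_inter_iff hξ hη hξ' hη' hξξ' hηη') ?_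
  rw [hΔ.neg_comp_neg.injOn.image_inter (hsphere _) (hsphere _),
    hΔ.injOn.image_inter (hsphere _) (hsphere _),
    hΔ.image_neg_comp_neg_sphereStar (norm_rankOne_of_unit hξ hη) (convex_sphereStar_rankOne hξ hη),
    hΔ.image_neg_comp_neg_sphereStar (norm_rankOne_of_unit hξ' hη')
      (convex_sphereStar_rankOne hξ' hη')]

/-- `G` is the linear part of `Δ` on the face `rankOne ℂ ξ η + closedBall 0 1 ∩ peirceZero ξ η` of
the unit ball. Its values outside `peirceZero ξ η` are irrelevant. -/
structure IsFaceMap (Δ : (H →L[ℂ] H) → Y) (ξ η : H) (G : (H →L[ℂ] H) →ₗ[ℝ] Y) : Prop where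
  map_rankOne_add : ∀ z ∈ peirceZero ξ η, ‖z‖ ≤ 1 →
    Δ (rankOne ℂ ξ η + z) = Δ (rankOne ℂ ξ η) + G z
  norm_map : ∀ z ∈ peirceZero ξ η, ‖G z‖ = ‖z‖

theorem image_rankOne_add_closedBall {K : Type*} [NormedAddCommGroup K] [NormedSpace ℝ K]
    (hξ : ‖ξ‖ = 1) (hη : ‖η‖ = 1) {j : K →ₗᵢ[ℝ] (H →L[ℂ] H)} (hj : range j = peirceZero ξ η) :
    (fun z ↦ rankOne ℂ ξ η + j z) '' closedBall 0 1 = sphereStar (rankOne ℂ ξ η) := by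
  refine Subset.antisymm ?_ fun x hx ↦ ?_
  · rintro _ ⟨z, hz, rfl⟩
    rw [mem_closedBall_zero_iff, ← j.norm_map] at hz
    exact rankOne_add_mem_sphereStar hξ hη (hj.subset (mem_range_self z)) hz
  · obtain ⟨hxmem, hx₁⟩ := (mem_sphereStar_rankOne_iff hξ hη).mp hx
    obtain ⟨z, hz⟩ := hj.superset hxmem
    rw [← hz, j.norm_map] at hx₁
    exact ⟨z, mem_closedBall_zero_iff.mpr hx₁, by simp only [hz, add_sub_cancel]⟩

theorem IsSphereIsometry.exists_isFaceMap_of_range_eq {K : Type*} [NormedAddCommGroup K]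
    [NormedSpace ℝ K] (hΔ : IsSphereIsometry Δ) (hξ : ‖ξ‖ = 1) (hη : ‖η‖ = 1)
    (hK : Submodule.span ℝ (extremePoints ℝ (closedBall (0 : K) 1)) = ⊤)
    {j : K →ₗᵢ[ℝ] (H →L[ℂ] H)} (hj : range j = peirceZero ξ η) : ∃ G, IsFaceMap Δ ξ η G := by
  have hface := image_rankOne_add_closedBall hξ hη hj
  have hnorm : ∀ z ∈ closedBall 0 1, ‖rankOne ℂ ξ η + j z‖ = 1 := fun z hz ↦
    (hface.subset (mem_image_of_mem _ hz)).1
  have hconvex : Convex ℝ ((fun z ↦ Δ (rankOne ℂ ξ η + j z)) '' closedBall 0 1) := by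
    rw [← image_image Δ, hface]
    exact hΔ.convex_image_sphereStar (norm_rankOne_of_unit hξ hη) (convex_sphereStar_rankOne hξ hη)
  obtain ⟨G, hG⟩ := exists_linearIsometry_of_convex_image
    (fun x hx y hy ↦ by
      rw [hΔ.norm_sub _ _ (hnorm x hx) (hnorm y hy), add_sub_add_left_eq_sub, ← map_sub,
        j.norm_map])
    (convex_closedBall 0 1) hconvex hK
    ⟨0, ball_subset_interior_closedBall (mem_ball_self one_pos)⟩
  obtain ⟨k, hk⟩ := j.toLinearMap.exists_leftInverse_of_injective
    (LinearMap.ker_eq_bot.mpr j.injective)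
  have hkj : ∀ z, k (j z) = z := LinearMap.congr_fun hk
  refine ⟨G.toLinearMap ∘ₗ k, fun z hz hz₁ ↦ ?_, fun z hz ↦ ?_⟩ <;>
    obtain ⟨w, rfl⟩ := hj.superset hz
  · have hGw := hG w (mem_closedBall_zero_iff.mpr (j.norm_map w ▸ hz₁)) 0
      (mem_closedBall_self zero_le_one)
    rw [map_zero, add_zero, sub_zero, sub_eq_iff_eq_add'] at hGw
    rw [hGw, LinearMap.comp_apply, hkj]
    rfl
  · rw [LinearMap.comp_apply, hkj, j.norm_map]
    exact G.norm_map w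

theorem IsSphereIsometry.exists_isFaceMap (hΔ : IsSphereIsometry Δ) (hξ : ‖ξ‖ = 1)
    (hη : ‖η‖ = 1) : ∃ G, IsFaceMap Δ ξ η G :=
  let ⟨_, hj⟩ := exists_linearIsometry_range_eq_peirceZero hξ hη
  hΔ.exists_isFaceMap_of_range_eq (K := (ℂ ∙ η)ᗮ →L[ℂ] (ℂ ∙ η)ᗮ) hξ hη
    span_extremePoints_closedBall_eq_top hj

namespace IsFaceMap

theorem apply_rankOne (hΔ : IsSphereIsometry Δ) (hG : IsFaceMap Δ ξ η G) (hξ : ‖ξ‖ = 1)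
    (hη : ‖η‖ = 1) (hξ' : ‖ξ'‖ = 1) (hη' : ‖η'‖ = 1) (hξξ' : ⟪ξ, ξ'⟫ = 0) (hηη' : ⟪η, η'⟫ = 0) :
    G (rankOne ℂ ξ' η') = Δ (rankOne ℂ ξ' η') := by
  obtain ⟨G', hG'⟩ := hΔ.exists_isFaceMap hξ' hη'
  have hodd : Δ (rankOne ℂ ξ' η' + -rankOne ℂ ξ η) = -Δ (rankOne ℂ ξ η + -rankOne ℂ ξ' η') := by
    simpa using hΔ.map_neg_rankOne_add_rankOne hξ hη (ξ' := -ξ') (by rwa [norm_neg]) hη'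
      (by rw [inner_neg_right, hξξ', neg_zero]) hηη'
  set e := rankOne ℂ ξ η
  set e' := rankOne ℂ ξ' η'
  have he : ‖e‖ = 1 := norm_rankOne_of_unit hξ hη
  have he' : ‖e'‖ = 1 := norm_rankOne_of_unit hξ' hη'
  have hmem' : e' ∈ peirceZero ξ η := rankOne_mem_peirceZero hξξ' hηη'
  have hmem : e ∈ peirceZero ξ' η' :=
    rankOne_mem_peirceZero (inner_eq_zero_symm.mp hξξ') (inner_eq_zero_symm.mp hηη')
  have hadd : Δ e + G e' = Δ e' + G' e := by
    rw [← hG.map_rankOne_add _ hmem' he'.le, ← hG'.map_rankOne_add _ hmem he.le, add_comm e]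
  have hsub : Δ e - G e' = -(Δ e' - G' e) := by
    have hface : Δ (e + -e') = Δ e - G e' := by
      rw [sub_eq_add_neg, ← map_neg G]
      exact hG.map_rankOne_add _ (neg_mem hmem') ((norm_neg e').trans_le he'.le)
    have hface' : Δ (e' + -e) = Δ e' - G' e := by
      rw [sub_eq_add_neg, ← map_neg G']
      exact hG'.map_rankOne_add _ (neg_mem hmem) ((norm_neg e).trans_le he.le)
    rw [← hface, ← hface', hodd, neg_neg]
  have htwo : (2 : ℝ) • G e' = (2 : ℝ) • Δ e' := by
    calc (2 : ℝ) • G e' = (Δ e + G e') - (Δ e - G e') := by module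
      _ = (2 : ℝ) • Δ e' := by rw [hadd, hsub]; module
  exact smul_right_injective Y two_ne_zero htwo

theorem eq_on_inf (hΔ : IsSphereIsometry Δ) (hG : IsFaceMap Δ ξ η G)
    (hG' : IsFaceMap Δ ξ' η' G') (hξ : ‖ξ‖ = 1) (hη : ‖η‖ = 1) (hξ' : ‖ξ'‖ = 1) (hη' : ‖η'‖ = 1)
    (hξξ' : ⟪ξ, ξ'⟫ = 0) (hηη' : ⟪η, η'⟫ = 0) :
    ∀ z ∈ peirceZero ξ η ⊓ peirceZero ξ' η', G z = G' z := by
  have hξ'ξ := inner_eq_zero_symm.mp hξξ'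
  have hη'η := inner_eq_zero_symm.mp hηη'
  refine eq_on_submodule_of_norm_le_one fun z hz hz₁ ↦ ?_
  have hface := hG.map_rankOne_add _ (add_mem (rankOne_mem_peirceZero hξξ' hηη') hz.1)
    (norm_rankOne_add_le hξ' hη' hz.2 hz₁)
  have hface' := hG'.map_rankOne_add _ (add_mem (rankOne_mem_peirceZero hξ'ξ hη'η) hz.2)
    (norm_rankOne_add_le hξ hη hz.1 hz₁)
  rw [map_add, hG.apply_rankOne hΔ hξ hη hξ' hη' hξξ' hηη'] at hface
  rw [map_add, hG'.apply_rankOne hΔ hξ' hη' hξ hη hξ'ξ hη'η, add_left_comm, hface,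
    add_left_comm] at hface'
  exact add_left_cancel (add_left_cancel hface')

end IsFaceMap

end Faces

section Functionals

open InnerProductSpace

variable {H : Type*} [NormedAddCommGroup H] [InnerProductSpace ℂ H] {ξ η ξ' η' k h : H}

theorem exists_unit_inner_eq_zero (hH : 3 ≤ Module.rank ℂ H) (a b : H) :
    ∃ u : H, ‖u‖ = 1 ∧ ⟪a, u⟫ = 0 ∧ ⟪b, u⟫ = 0 := by
  set S := Submodule.span ℂ ({a, b} : Set H)
  have : FiniteDimensional ℂ S := FiniteDimensional.span_of_finite ℂ (toFinite _)
  have hrank : Module.rank ℂ S < 3 := by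
    calc Module.rank ℂ S ≤ Cardinal.mk ({a, b} : Set H) := rank_span_le _
      _ ≤ 2 := by
          refine Cardinal.mk_insert_le.trans ?_
          rw [Cardinal.mk_singleton, one_add_one_eq_two]
      _ < 3 := by norm_num
  have hne : Sᗮ ≠ ⊥ := by
    intro hbot
    rw [Submodule.orthogonal_eq_bot_iff.mp hbot, rank_top] at hrank
    exact hrank.not_ge hH
  obtain ⟨v, hv, hv₀⟩ := Submodule.exists_mem_ne_zero_of_ne_bot hne
  have horth : ∀ c ∈ ({a, b} : Set H), ⟪c, (‖v‖ : ℂ)⁻¹ • v⟫ = 0 := fun c hc ↦ by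
    rw [inner_smul_right, hv c (Submodule.subset_span hc), mul_zero]
  exact ⟨_, norm_smul_inv_norm (𝕜 := ℂ) hv₀, horth a (by simp), horth b (by simp)⟩

theorem rankOne_eq_smul_rankOne_normalized (p q : H) :
    rankOne ℂ p q = (‖p‖ * ‖q‖) • rankOne ℂ ((‖p‖ : ℂ)⁻¹ • p) ((‖q‖ : ℂ)⁻¹ • q) := by
  rcases eq_or_ne p 0 with rfl | hp
  · simp
  rcases eq_or_ne q 0 with rfl | hq
  · simp
  have hp' : (‖p‖ : ℂ) ≠ 0 := by exact_mod_cast norm_ne_zero_iff.mpr hp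
  have hq' : (‖q‖ : ℂ) ≠ 0 := by exact_mod_cast norm_ne_zero_iff.mpr hq
  ext v
  rw [_root_.smul_apply, ← Complex.coe_smul, rankOne_apply, rankOne_apply, inner_smul_left,
    map_inv₀, Complex.conj_ofReal, smul_smul, smul_smul, Complex.ofReal_mul]
  congr 1
  field_simp

variable [CompleteSpace H]

/-- The compression `(1 - k k*) x (1 - h h*)` of `x`, which for unit vectors `k` and `h` is the
projection of `x` onto `peirceZero k h`; it is written as a rank-two perturbation of `x`. -/
noncomputable def peirceProj (k h : H) (x : H →L[ℂ] H) : H →L[ℂ] H :=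
  x - rankOne ℂ k (ContinuousLinearMap.adjoint x k) - rankOne ℂ (x h - ⟪k, x h⟫ • k) h

theorem peirceProj_apply (k h : H) (x : H →L[ℂ] H) (v : H) :
    peirceProj k h x v = x (v - ⟪h, v⟫ • h) - ⟪k, x (v - ⟪h, v⟫ • h)⟫ • k := by
  rw [peirceProj, _root_.sub_apply, _root_.sub_apply, rankOne_apply, rankOne_apply,
    ContinuousLinearMap.adjoint_inner_left, map_sub, map_smul, inner_sub_right, inner_smul_right]
  module

theorem norm_peirceProj_le (hk : ‖k‖ = 1) (hh : ‖h‖ = 1) (x : H →L[ℂ] H) :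
    ‖peirceProj k h x‖ ≤ ‖x‖ := by
  refine ContinuousLinearMap.opNorm_le_bound _ (norm_nonneg _) fun v ↦ ?_
  rw [peirceProj_apply]
  refine (norm_sub_inner_smul_le hk _).trans ((x.le_opNorm _).trans ?_)
  gcongr
  exact norm_sub_inner_smul_le hh v

theorem peirceProj_mem (hk : ‖k‖ = 1) (hh : ‖h‖ = 1) (x : H →L[ℂ] H) :
    peirceProj k h x ∈ peirceZero k h := by
  refine ⟨?_, fun v ↦ ?_⟩
  · rw [peirceProj_apply, inner_self_eq_one_of_norm_eq_one hh, one_smul, sub_self, map_zero,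
      inner_zero_right, zero_smul, sub_zero]
  · rw [peirceProj_apply, inner_sub_right, inner_smul_right,
      inner_self_eq_one_of_norm_eq_one hk, mul_one, sub_self]

theorem peirceProj_mem_of_mem {x : H →L[ℂ] H} (hx : x ∈ peirceZero ξ η)
    (hk : ⟪ξ, k⟫ = 0) (hh : ⟪η, h⟫ = 0) : peirceProj k h x ∈ peirceZero ξ η := by
  refine ⟨?_, fun v ↦ ?_⟩
  · rw [peirceProj_apply, inner_eq_zero_symm.mp hh, zero_smul, sub_zero, hx.1, inner_zero_right,
      zero_smul, sub_zero]
  · rw [peirceProj_apply, inner_sub_right, inner_smul_right, hx.2, hk, mul_zero, sub_zero]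

theorem norm_sub_rankOne_add_peirceProj_sq_le {x : H →L[ℂ] H} (hx : ‖x‖ ≤ 1) (hh : ‖h‖ = 1)
    (hk : ‖k‖ = 1) (hxh : x h = (‖x h‖ : ℂ) • k) :
    ‖x - (rankOne ℂ k h + peirceProj k h x)‖ ^ 2 ≤ 2 * (1 - ‖x h‖) := by
  have hkx : ⟪k, x h⟫ = ‖x h‖ := by
    rw [hxh, inner_smul_right, inner_self_eq_one_of_norm_eq_one hk, mul_one, ← hxh]
  set w := ContinuousLinearMap.adjoint x k with hw
  have hsub : x - (rankOne ℂ k h + peirceProj k h x) = rankOne ℂ k (w - h) := by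
    rw [peirceProj, hkx, ← hxh, sub_self, map_zero, map_sub, _root_.zero_apply]
    abel
  have hw₁ : ‖w‖ ≤ 1 := by
    refine ((ContinuousLinearMap.adjoint x).unit_le_opNorm k hk.le).trans ?_
    rwa [LinearIsometryEquiv.norm_map]
  have hre : RCLike.re ⟪w, h⟫ = ‖x h‖ := by
    rw [hw, ContinuousLinearMap.adjoint_inner_left, hkx]
    exact Complex.ofReal_re _
  rw [hsub, norm_rankOne, hk, one_mul, @norm_sub_sq ℂ, hre, hh]
  nlinarith [norm_nonneg w]

theorem exists_norm_sub_rankOne_add_lt {x : H →L[ℂ] H} (hx : ‖x‖ = 1) {ε : ℝ} (hε : 0 < ε) :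
    ∃ (k h : H) (z : H →L[ℂ] H), ‖k‖ = 1 ∧ ‖h‖ = 1 ∧ z ∈ peirceZero k h ∧ ‖z‖ ≤ 1 ∧
      ‖x - (rankOne ℂ k h + z)‖ < ε := by
  have hlt : (1 - ε ^ 2 / 2).toNNReal < ‖x‖₊ := by
    rw [← NNReal.coe_lt_coe, Real.coe_toNNReal', coe_nnnorm, hx]
    exact max_lt (sub_lt_self _ (by positivity)) one_pos
  obtain ⟨h, hh, hxh⟩ := x.exists_nnnorm_eq_one_lt_apply_of_lt_opNNNorm hlt
  have hh₁ : ‖h‖ = 1 := congrArg NNReal.toReal hh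
  have hxh₀ : x h ≠ 0 := nnnorm_pos.mp (bot_le.trans_lt hxh)
  have hxhε : 1 - ε ^ 2 / 2 < ‖x h‖ := (Real.le_coe_toNNReal _).trans_lt hxh
  have hk : ‖(‖x h‖ : ℂ)⁻¹ • x h‖ = 1 := norm_smul_inv_norm (𝕜 := ℂ) hxh₀
  have hnear := norm_sub_rankOne_add_peirceProj_sq_le hx.le hh₁ hk
    (smul_inv_smul₀ (by exact_mod_cast norm_ne_zero_iff.mpr hxh₀) _).symm
  exact ⟨_, h, _, hk, hh₁, peirceProj_mem hk hh₁ x, (norm_peirceProj_le hk hh₁ x).trans hx.le,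
    lt_of_pow_lt_pow_left₀ 2 hε.le (by linarith)⟩

variable {Y : Type*} [NormedAddCommGroup Y] [NormedSpace ℝ Y] {Δ : (H →L[ℂ] H) → Y}
  {G : (H →L[ℂ] H) →ₗ[ℝ] Y} {ψ : StrongDual ℝ Y}

theorem IsFaceMap.dual_apply_of_orthogonal (hΔ : IsSphereIsometry Δ) (hG : IsFaceMap Δ k h G)
    (hk : ‖k‖ = 1) (hh : ‖h‖ = 1) (hξ : ‖ξ‖ = 1) (hη : ‖η‖ = 1) (hkξ : ⟪k, ξ⟫ = 0)
    (hhη : ⟪h, η⟫ = 0) (hψ : ‖ψ‖ ≤ 1) (hψe : ψ (Δ (rankOne ℂ ξ η)) = 1) :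
    ∀ z ∈ peirceZero k h, ψ (G z) = reCoeff ξ η z := by
  refine eq_reCoeff_of_le_norm hξ hη (rankOne_mem_peirceZero hkξ hhη)
    (L := ψ.toLinearMap ∘ₗ G) (fun z hz ↦ ?_) ?_
  · rw [← hG.norm_map z hz]
    exact (le_abs_self _).trans
      ((ψ.le_opNorm _).trans (mul_le_of_le_one_left (norm_nonneg _) hψ))
  · rw [← hψe, ← hG.apply_rankOne hΔ hk hh hξ hη hkξ hhη]
    rfl

/- In rank three some rank-one partial isometry `rankOne ℂ k h` is orthogonal to both rank-one
operators, so both occur in the linear part of its face. -/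
theorem IsSphereIsometry.dual_map_rankOne (hΔ : IsSphereIsometry Δ) (hH : 3 ≤ Module.rank ℂ H)
    (hξ : ‖ξ‖ = 1) (hη : ‖η‖ = 1) (hψ : ‖ψ‖ ≤ 1) (hψe : ψ (Δ (rankOne ℂ ξ η)) = 1)
    (hξ' : ‖ξ'‖ = 1) (hη' : ‖η'‖ = 1) :
    ψ (Δ (rankOne ℂ ξ' η')) = reCoeff ξ η (rankOne ℂ ξ' η') := by
  obtain ⟨k, hk, hξk, hξ'k⟩ := exists_unit_inner_eq_zero hH ξ ξ'
  obtain ⟨h, hh, hηh, hη'h⟩ := exists_unit_inner_eq_zero hH η η'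
  rw [inner_eq_zero_symm] at hξk hξ'k hηh hη'h
  obtain ⟨G, hG⟩ := hΔ.exists_isFaceMap hk hh
  rw [← hG.apply_rankOne hΔ hk hh hξ' hη' hξ'k hη'h]
  exact hG.dual_apply_of_orthogonal hΔ hk hh hξ hη hξk hηh hψ hψe _
    (rankOne_mem_peirceZero hξ'k hη'h)

theorem IsFaceMap.dual_apply_rankOne (hΔ : IsSphereIsometry Δ) (hH : 3 ≤ Module.rank ℂ H)
    (hG : IsFaceMap Δ ξ' η' G) (hξ' : ‖ξ'‖ = 1) (hη' : ‖η'‖ = 1) (hξ : ‖ξ‖ = 1) (hη : ‖η‖ = 1)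
    (hψ : ‖ψ‖ ≤ 1) (hψe : ψ (Δ (rankOne ℂ ξ η)) = 1) {p q : H} (hp : ⟪ξ', p⟫ = 0)
    (hq : ⟪η', q⟫ = 0) : ψ (G (rankOne ℂ p q)) = reCoeff ξ η (rankOne ℂ p q) := by
  rcases eq_or_ne p 0 with rfl | hp₀
  · simp
  rcases eq_or_ne q 0 with rfl | hq₀
  · simp
  have hpu : ‖(‖p‖ : ℂ)⁻¹ • p‖ = 1 := norm_smul_inv_norm (𝕜 := ℂ) hp₀
  have hqu : ‖(‖q‖ : ℂ)⁻¹ • q‖ = 1 := norm_smul_inv_norm (𝕜 := ℂ) hq₀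
  rw [rankOne_eq_smul_rankOne_normalized, map_smul G, map_smul ψ, map_smul (reCoeff ξ η),
    hG.apply_rankOne hΔ hξ' hη' hpu hqu (by rw [inner_smul_right, hp, mul_zero])
      (by rw [inner_smul_right, hq, mul_zero]),
    hΔ.dual_map_rankOne hH hξ hη hψ hψe hpu hqu]

theorem IsFaceMap.dual_apply (hΔ : IsSphereIsometry Δ) (hH : 3 ≤ Module.rank ℂ H)
    (hG : IsFaceMap Δ ξ' η' G) (hξ' : ‖ξ'‖ = 1) (hη' : ‖η'‖ = 1) (hξ : ‖ξ‖ = 1) (hη : ‖η‖ = 1)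
    (hψ : ‖ψ‖ ≤ 1) (hψe : ψ (Δ (rankOne ℂ ξ η)) = 1) {z : H →L[ℂ] H}
    (hz : z ∈ peirceZero ξ' η') : ψ (G z) = reCoeff ξ η z := by
  obtain ⟨k, hk, hξk, hξ'k⟩ := exists_unit_inner_eq_zero hH ξ ξ'
  obtain ⟨h, hh, hηh, hη'h⟩ := exists_unit_inner_eq_zero hH η η'
  obtain ⟨G', hG'⟩ := hΔ.exists_isFaceMap hk hh
  have hrankOne : ∀ {p q : H}, ⟪ξ', p⟫ = 0 → ⟪η', q⟫ = 0 →
      ψ (G (rankOne ℂ p q)) = reCoeff ξ η (rankOne ℂ p q) :=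
    hG.dual_apply_rankOne hΔ hH hξ' hη' hξ hη hψ hψe
  have hproj : ψ (G (peirceProj k h z)) = reCoeff ξ η (peirceProj k h z) := by
    rw [hG.eq_on_inf hΔ hG' hξ' hη' hk hh hξ'k hη'h _
      ⟨peirceProj_mem_of_mem hz hξ'k hη'h, peirceProj_mem hk hh z⟩]
    exact hG'.dual_apply_of_orthogonal hΔ hk hh hξ hη (inner_eq_zero_symm.mp hξk)
      (inner_eq_zero_symm.mp hηh) hψ hψe _ (peirceProj_mem hk hh z)
  have hdecomp : z = peirceProj k h z + rankOne ℂ k (ContinuousLinearMap.adjoint z k) +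
      rankOne ℂ (z h - ⟪k, z h⟫ • k) h := by
    rw [peirceProj]
    abel
  rw [hdecomp, map_add, map_add, map_add, map_add, map_add, map_add, hproj,
    hrankOne hξ'k (by rw [ContinuousLinearMap.adjoint_inner_right, hz.1, inner_zero_left]),
    hrankOne (by rw [inner_sub_right, inner_smul_right, hz.2, hξ'k, mul_zero, sub_zero]) hη'h]

theorem IsSphereIsometry.dual_map_rankOne_add (hΔ : IsSphereIsometry Δ) (hH : 3 ≤ Module.rank ℂ H)
    (hξ : ‖ξ‖ = 1) (hη : ‖η‖ = 1) (hψ : ‖ψ‖ ≤ 1) (hψe : ψ (Δ (rankOne ℂ ξ η)) = 1)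
    (hξ' : ‖ξ'‖ = 1) (hη' : ‖η'‖ = 1) {z : H →L[ℂ] H} (hz : z ∈ peirceZero ξ' η')
    (hz₁ : ‖z‖ ≤ 1) :
    ψ (Δ (rankOne ℂ ξ' η' + z)) = reCoeff ξ η (rankOne ℂ ξ' η' + z) := by
  obtain ⟨G, hG⟩ := hΔ.exists_isFaceMap hξ' hη'
  rw [hG.map_rankOne_add z hz hz₁, map_add, map_add,
    hΔ.dual_map_rankOne hH hξ hη hψ hψe hξ' hη', hG.dual_apply hΔ hH hξ' hη' hξ hη hψ hψe hz]

theorem IsSphereIsometry.dual_map_eq_reCoeff (hΔ : IsSphereIsometry Δ) (hH : 3 ≤ Module.rank ℂ H)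
    (hξ : ‖ξ‖ = 1) (hη : ‖η‖ = 1) (hψ : ‖ψ‖ ≤ 1) (hψe : ψ (Δ (rankOne ℂ ξ η)) = 1)
    {x : H →L[ℂ] H} (hx : ‖x‖ = 1) : ψ (Δ x) = reCoeff ξ η x := by
  refine eq_of_forall_dist_le fun ε hε ↦ ?_
  obtain ⟨k, h, z, hk, hh, hz, hz₁, hxz⟩ := exists_norm_sub_rankOne_add_lt hx (half_pos hε)
  set y := rankOne ℂ k h + z
  have hψxy : |ψ (Δ x) - ψ (Δ y)| ≤ ‖x - y‖ := by
    rw [← map_sub, ← hΔ.norm_sub x y hx (norm_rankOne_add hk hh hz hz₁)]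
    exact (ψ.le_opNorm _).trans (mul_le_of_le_one_left (norm_nonneg _) hψ)
  have hcoeff : |reCoeff ξ η y - reCoeff ξ η x| ≤ ‖x - y‖ := by
    rw [← map_sub, norm_sub_rev]
    exact abs_reCoeff_le hξ hη _
  rw [hΔ.dual_map_rankOne_add hH hξ hη hψ hψe hk hh hz hz₁] at hψxy
  calc dist (ψ (Δ x)) (reCoeff ξ η x)
      ≤ |ψ (Δ x) - reCoeff ξ η y| + |reCoeff ξ η y - reCoeff ξ η x| := abs_sub_le _ _ _
    _ ≤ ε := by linarith

end Functionals

section LinearExtension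

variable {X Y : Type*} [NormedAddCommGroup X] [NormedSpace ℝ X] [NormedAddCommGroup Y]
  [NormedSpace ℝ Y] {Δ : X → Y}

/-- The positively homogeneous extension to `X` of a map given on its unit sphere. -/
noncomputable def homogeneousExtension (Δ : X → Y) (x : X) : Y := ‖x‖ • Δ (‖x‖⁻¹ • x)

theorem homogeneousExtension_zero : homogeneousExtension Δ 0 = 0 := by
  rw [homogeneousExtension, norm_zero, zero_smul]

theorem homogeneousExtension_of_norm_eq_one {x : X} (hx : ‖x‖ = 1) :
    homogeneousExtension Δ x = Δ x := by
  rw [homogeneousExtension, hx, inv_one, one_smul, one_smul]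

theorem eq_homogeneousExtension {T : X → Y} (hT : ∀ (r : ℝ) (x : X), T (r • x) = r • T x)
    (hTΔ : ∀ x, ‖x‖ = 1 → T x = Δ x) : T = homogeneousExtension Δ := by
  funext x
  rcases eq_or_ne x 0 with rfl | hx
  · rw [homogeneousExtension_zero, ← zero_smul ℝ (0 : X), hT, zero_smul]
  · have hunit : ‖‖x‖⁻¹ • x‖ = 1 := norm_smul_inv_norm (𝕜 := ℝ) hx
    rw [homogeneousExtension, ← hTΔ _ hunit, ← hT, smul_inv_smul₀ (norm_ne_zero_iff.mpr hx)]

theorem dual_homogeneousExtension {ψ : Y →ₗ[ℝ] ℝ} {φ : X →ₗ[ℝ] ℝ}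
    (h : ∀ x, ‖x‖ = 1 → ψ (Δ x) = φ x) (x : X) : ψ (homogeneousExtension Δ x) = φ x := by
  rcases eq_or_ne x 0 with rfl | hx
  · rw [homogeneousExtension_zero, map_zero, map_zero]
  · have hunit : ‖‖x‖⁻¹ • x‖ = 1 := norm_smul_inv_norm (𝕜 := ℝ) hx
    rw [homogeneousExtension, map_smul, h _ hunit, ← map_smul,
      smul_inv_smul₀ (norm_ne_zero_iff.mpr hx)]

namespace IsSphereIsometry

theorem norm_homogeneousExtension (hΔ : IsSphereIsometry Δ) (x : X) :
    ‖homogeneousExtension Δ x‖ = ‖x‖ := by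
  rcases eq_or_ne x 0 with rfl | hx
  · rw [homogeneousExtension_zero, norm_zero, norm_zero]
  · have hunit : ‖‖x‖⁻¹ • x‖ = 1 := norm_smul_inv_norm (𝕜 := ℝ) hx
    rw [homogeneousExtension, norm_smul, norm_norm, hΔ.norm_map _ hunit, mul_one]

theorem surjective_homogeneousExtension (hΔ : IsSphereIsometry Δ) :
    Function.Surjective (homogeneousExtension Δ) := by
  intro y
  rcases eq_or_ne y 0 with rfl | hy
  · exact ⟨0, homogeneousExtension_zero⟩
  have hy₀ : ‖y‖ ≠ 0 := norm_ne_zero_iff.mpr hy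
  obtain ⟨x, hx, hxy⟩ := hΔ.surj (‖y‖⁻¹ • y) (norm_smul_inv_norm (𝕜 := ℝ) hy)
  refine ⟨‖y‖ • x, ?_⟩
  rw [homogeneousExtension, norm_smul, norm_norm, hx, mul_one, inv_smul_smul₀ hy₀, hxy,
    smul_inv_smul₀ hy₀]

theorem exists_linearIsometryEquiv_of_separating (hΔ : IsSphereIsometry Δ)
    (hsep : ∀ x : X, x ≠ 0 → ∃ (ψ : Y →ₗ[ℝ] ℝ) (φ : X →ₗ[ℝ] ℝ),
      (∀ u, ‖u‖ = 1 → ψ (Δ u) = φ u) ∧ φ x ≠ 0) :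
    ∃ T : X ≃ₗᵢ[ℝ] Y, ∀ x, ‖x‖ = 1 → T x = Δ x := by
  have hzero : ∀ y, (∀ (ψ : Y →ₗ[ℝ] ℝ) (φ : X →ₗ[ℝ] ℝ), (∀ u, ‖u‖ = 1 → ψ (Δ u) = φ u) →
      ψ y = 0) → y = 0 := by
    intro y hy
    obtain ⟨x, rfl⟩ := hΔ.surjective_homogeneousExtension y
    suffices x = 0 by rw [this, homogeneousExtension_zero]
    by_contra hx
    obtain ⟨ψ, φ, hψφ, hφx⟩ := hsep x hx
    exact hφx ((dual_homogeneousExtension hψφ x).symm.trans (hy ψ φ hψφ))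
  let T : X →ₗᵢ[ℝ] Y :=
    { toFun := homogeneousExtension Δ
      map_add' x y := sub_eq_zero.mp (hzero _ fun ψ φ hψφ ↦ by
        simp only [map_sub, map_add, dual_homogeneousExtension hψφ, sub_self])
      map_smul' r x := sub_eq_zero.mp (hzero _ fun ψ φ hψφ ↦ by
        simp only [map_sub, map_smul, dual_homogeneousExtension hψφ, RingHom.id_apply,
          sub_self])
      norm_map' := hΔ.norm_homogeneousExtension }
  exact ⟨LinearIsometryEquiv.ofSurjective T hΔ.surjective_homogeneousExtension,
    fun x hx ↦ homogeneousExtension_of_norm_eq_one hx⟩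

open InnerProductSpace in
theorem exists_linearIsometryEquiv {H : Type*} [NormedAddCommGroup H] [InnerProductSpace ℂ H]
    [CompleteSpace H] {Δ : (H →L[ℂ] H) → Y} (hΔ : IsSphereIsometry Δ)
    (hH : 3 ≤ Module.rank ℂ H) :
    ∃ T : (H →L[ℂ] H) ≃ₗᵢ[ℝ] Y, ∀ x, ‖x‖ = 1 → T x = Δ x := by
  refine hΔ.exists_linearIsometryEquiv_of_separating fun x hx ↦ ?_
  obtain ⟨ξ, η, hξ, hη, hx'⟩ : ∃ ξ η : H, ‖ξ‖ = 1 ∧ ‖η‖ = 1 ∧ reCoeff ξ η x ≠ 0 := by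
    by_contra! hcoeff
    exact hx (eq_zero_of_reCoeff_eq_zero hcoeff)
  obtain ⟨ψ, hψ, hψe⟩ := exists_dual_vector'' ℝ (Δ (rankOne ℂ ξ η))
  rw [hΔ.norm_map _ (norm_rankOne_of_unit hξ hη)] at hψe
  exact ⟨ψ.toLinearMap, reCoeff ξ η,
    fun u hu ↦ hΔ.dual_map_eq_reCoeff hH hξ hη hψ hψe hu, hx'⟩

end IsSphereIsometry

end LinearExtension

/-- for a complex Hilbert space `H` with `dim H ≥ 3`, the von Neumann
algebra `B(H)` satisfies the Mazur–Ulam property: every surjective isometry between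
the unit sphere of `B(H)` and the unit sphere of a real Banach space `Y` admits a
unique extension to a surjective real-linear isometry from `B(H)` onto `Y`. -/
theorem mazur_ulam_property_BH_rank_ge_three
    {H : Type*} [NormedAddCommGroup H] [InnerProductSpace ℂ H] [CompleteSpace H]
    (hH : 3 ≤ Module.rank ℂ H)
    {Y : Type*} [NormedAddCommGroup Y] [NormedSpace ℝ Y] [CompleteSpace Y]
    (Δ : (H →L[ℂ] H) → Y)
    (hmap : ∀ x : H →L[ℂ] H, ‖x‖ = 1 → ‖Δ x‖ = 1)
    (hsurj : ∀ y : Y, ‖y‖ = 1 → ∃ x : H →L[ℂ] H, ‖x‖ = 1 ∧ Δ x = y)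
    (hiso : ∀ x y : H →L[ℂ] H, ‖x‖ = 1 → ‖y‖ = 1 → ‖Δ x - Δ y‖ = ‖x - y‖) :
    ∃! T : (H →L[ℂ] H) → Y,
      (∀ x y : H →L[ℂ] H, T (x + y) = T x + T y) ∧
      (∀ (r : ℝ) (x : H →L[ℂ] H), T (r • x) = r • T x) ∧
      (∀ x : H →L[ℂ] H, ‖T x‖ = ‖x‖) ∧
      Function.Surjective T ∧
      (∀ x : H →L[ℂ] H, ‖x‖ = 1 → T x = Δ x) := by
  have hΔ : IsSphereIsometry Δ := ⟨hmap, hsurj, hiso⟩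
  obtain ⟨T, hTΔ⟩ := hΔ.exists_linearIsometryEquiv hH
  refine ⟨T, ⟨map_add T, map_smul T, T.norm_map, T.surjective, hTΔ⟩, ?_⟩
  rintro S ⟨-, hS, -, -, hSΔ⟩
  rw [eq_homogeneousExtension hS hSΔ, eq_homogeneousExtension (map_smul T) hTΔ]
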